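/- arXiv:0805.4126 — 3 statements merged into one kernel-verified Lean document; each statement's English description precedes it below -/
import Mathlib

section
/- Let r ≥ 2, let 1 ≤ n₁ ≤ n₂ ≤ ⋯ ≤ n_r be integers, set n = n₁ + ⋯ + n_r, and let s ≥ 0. Suppose that either (s ≤ n₁ + 3 and 1 < n₁ < n₂) or (s ≤ n₂ + 2 and (n₁ = 1 or n₁ = n₂)). Then for a generic configuration in ℙⁿ(ℂ) consisting of s points P₁,…,P_s and r linear subspaces Λ₁,…,Λ_r of dimensions n₁−1,…,n_r−1 respectively, there exists a rational normal curve passing through P₁,…,P_s and meeting each Λᵢ in exactly nᵢ distinct points. -/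
noncomputable section

/-- Projective space `ℙⁿ(ℂ)`, the projectivization of `ℂ^{n+1}`. -/
abbrev PP (k : ℕ) := Projectivization ℂ (Fin (k + 1) → ℂ)

/-- The vector of the monomials `s^k t^(n-k)`, used to parametrize rational normal curves. -/
def veron (n : ℕ) (v : Fin 2 → ℂ) : Fin (n + 1) → ℂ :=
  fun k => v 0 ^ (k : ℕ) * v 1 ^ (n - (k : ℕ))

/-- `C ⊆ ℙⁿ` is a rational normal curve if it is the image of `[s:t] ↦ [F₀(s,t):⋯:Fₙ(s,t)]`
for a basis `F₀,…,Fₙ` of the degree-`n` binary forms; such a basis is encoded by an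
invertible matrix of coefficients applied to the monomial vector `veron`. -/
def IsRNC (n : ℕ) (C : Set (PP n)) : Prop :=
  ∃ M : Matrix (Fin (n + 1)) (Fin (n + 1)) ℂ, IsUnit M.det ∧
    C = {P : PP n | ∃ v : Fin 2 → ℂ, v ≠ 0 ∧ ∃ c : ℂ, c ≠ 0 ∧
      P.rep = c • M.mulVec (veron n v)}

/-- The linear subspace of `ℙⁿ` given as the projectivization of the column span of a matrix. -/
def projSet {n m : ℕ} (A : Matrix (Fin (n + 1)) (Fin m) ℂ) : Set (PP n) :=
  {P : PP n | P.rep ∈ Submodule.span ℂ (Set.range fun j => fun r => A r j)}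

/-- A property `Q` of configurations of `s` points (rank-one `(n+1)×1` matrices) and `r`
linear subspaces of dimensions `nv j - 1` (rank-`(nv j)` matrices of size `(n+1)×(nv j)`)
holds generically: there is a nonzero polynomial in the matrix entries such that `Q`
holds at every full-rank tuple where the polynomial does not vanish. -/
def GenHoldsPtsSpaces (n s r : ℕ) (nv : Fin r → ℕ)
    (Q : (Fin s → Matrix (Fin (n + 1)) (Fin 1) ℂ) →
         ((j : Fin r) → Matrix (Fin (n + 1)) (Fin (nv j)) ℂ) → Prop) : Prop :=
  ∃ F : MvPolynomial
      ((Fin s × Fin (n + 1) × Fin 1) ⊕ ((j : Fin r) × (Fin (n + 1) × Fin (nv j)))) ℂ,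
    F ≠ 0 ∧ ∀ P B, (∀ i, (P i).rank = 1) → (∀ j, (B j).rank = nv j) →
      MvPolynomial.eval
        (Sum.elim (fun q => P q.1 q.2.1 q.2.2) (fun q => B q.1 q.2.1 q.2.2)) F ≠ 0 →
      Q P B


section Reg

variable {σ : Type*}

/-- Zariski neighbourhoods of a point. -/
def ZN (x0 : σ → ℂ) : Filter (σ → ℂ) where
  sets := {S | ∃ q : MvPolynomial σ ℂ, MvPolynomial.eval x0 q ≠ 0 ∧
    ∀ x, MvPolynomial.eval x q ≠ 0 → x ∈ S}
  univ_sets := ⟨1, by simp, by simp⟩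
  sets_of_superset := by
    rintro S T ⟨q, h, h'⟩ hST
    exact ⟨q, h, fun x hx => hST (h' x hx)⟩
  inter_sets := by
    rintro S T ⟨q, h, h'⟩ ⟨q2, h2, h2'⟩
    refine ⟨q * q2, by simp [h, h2], fun x hx => ?_⟩
    simp only [map_mul, ne_eq, mul_eq_zero, not_or] at hx
    exact ⟨h' x hx.1, h2' x hx.2⟩

theorem ZN_iff {x0 : σ → ℂ} {Q : (σ → ℂ) → Prop} : (∀ᶠ x in ZN x0, Q x) ↔
    ∃ q : MvPolynomial σ ℂ, MvPolynomial.eval x0 q ≠ 0 ∧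
    ∀ x, MvPolynomial.eval x q ≠ 0 → Q x := Iff.rfl

theorem ZN_self {x0 : σ → ℂ} {Q : (σ → ℂ) → Prop} (h : ∀ᶠ x in ZN x0, Q x) : Q x0 := by
  obtain ⟨q, h, h'⟩ := ZN_iff.1 h
  exact h' _ h

/-- Functions regular at a point. -/
def Reg (x0 : σ → ℂ) (f : (σ → ℂ) → ℂ) : Prop :=
  ∃ p q : MvPolynomial σ ℂ, MvPolynomial.eval x0 q ≠ 0 ∧
    ∀ x, MvPolynomial.eval x q ≠ 0 → f x = MvPolynomial.eval x p / MvPolynomial.eval x q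

variable {x0 : σ → ℂ} {f g : (σ → ℂ) → ℂ}

theorem Reg.const (c : ℂ) : Reg x0 (fun _ => c) :=
  ⟨MvPolynomial.C c, 1, by simp, by simp⟩

theorem Reg.coord (i : σ) : Reg x0 (fun x => x i) :=
  ⟨MvPolynomial.X i, 1, by simp, by simp⟩

theorem Reg.add (hf : Reg x0 f) (hg : Reg x0 g) : Reg x0 (fun x => f x + g x) := by
  obtain ⟨p, q, h, h'⟩ := hf
  obtain ⟨p2, q2, h2, h2'⟩ := hg
  refine ⟨p * q2 + q * p2, q * q2, by simp [h, h2], fun x hx => ?_⟩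
  simp only [map_mul, ne_eq, mul_eq_zero, not_or] at hx
  beta_reduce
  rw [h' x hx.1, h2' x hx.2, div_add_div _ _ hx.1 hx.2]
  simp

theorem Reg.mul (hf : Reg x0 f) (hg : Reg x0 g) : Reg x0 (fun x => f x * g x) := by
  obtain ⟨p, q, h, h'⟩ := hf
  obtain ⟨p2, q2, h2, h2'⟩ := hg
  refine ⟨p * p2, q * q2, by simp [h, h2], fun x hx => ?_⟩
  simp only [map_mul, ne_eq, mul_eq_zero, not_or] at hx
  beta_reduce
  rw [h' x hx.1, h2' x hx.2, div_mul_div_comm]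
  simp

theorem Reg.neg (hf : Reg x0 f) : Reg x0 (fun x => - f x) := by
  simpa using (Reg.const (-1)).mul hf

theorem Reg.sub (hf : Reg x0 f) (hg : Reg x0 g) : Reg x0 (fun x => f x - g x) := by
  simpa [sub_eq_add_neg] using hf.add hg.neg

theorem Reg.inv (hf : Reg x0 f) (h0 : f x0 ≠ 0) : Reg x0 (fun x => (f x)⁻¹) := by
  obtain ⟨p, q, h, h'⟩ := hf
  rw [h' _ h] at h0
  have hp : MvPolynomial.eval x0 p ≠ 0 := fun e => h0 (by simp [e])
  refine ⟨q * q, p * q, by simp [h, hp], fun x hx => ?_⟩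
  simp only [map_mul, ne_eq, mul_eq_zero, not_or] at hx
  beta_reduce
  rw [h' x hx.2, map_mul, map_mul, inv_div]
  have := hx.1
  have := hx.2
  field_simp

theorem Reg.div (hf : Reg x0 f) (hg : Reg x0 g) (h0 : g x0 ≠ 0) :
    Reg x0 (fun x => f x / g x) := by
  simpa [div_eq_mul_inv] using hf.mul (hg.inv h0)

theorem Reg.ne (hf : Reg x0 f) (h0 : f x0 ≠ 0) : ∀ᶠ x in ZN x0, f x ≠ 0 := by
  obtain ⟨p, q, h, h'⟩ := hf
  rw [h' _ h] at h0
  have hp : MvPolynomial.eval x0 p ≠ 0 := fun e => h0 (by simp [e])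
  refine ZN_iff.2 ⟨p * q, by simp [h, hp], fun x hx => ?_⟩
  simp only [map_mul, ne_eq, mul_eq_zero, not_or] at hx
  rw [h' x hx.2]
  exact div_ne_zero hx.1 hx.2

theorem Reg.sum {ι : Type*} (s : Finset ι) {f : ι → (σ → ℂ) → ℂ} (h : ∀ i ∈ s, Reg x0 (f i)) :
    Reg x0 (fun x => ∑ i ∈ s, f i x) := by
  classical
  induction s using Finset.induction_on with
  | empty => simpa using Reg.const 0
  | insert a s ha ih =>
    simp only [Finset.sum_insert ha]
    exact (h a (by simp)).add (ih fun i hi => h i (by simp [hi]))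

theorem Reg.prod {ι : Type*} (s : Finset ι) {f : ι → (σ → ℂ) → ℂ} (h : ∀ i ∈ s, Reg x0 (f i)) :
    Reg x0 (fun x => ∏ i ∈ s, f i x) := by
  classical
  induction s using Finset.induction_on with
  | empty => simpa using Reg.const 1
  | insert a s ha ih =>
    simp only [Finset.prod_insert ha]
    exact (h a (by simp)).mul (ih fun i hi => h i (by simp [hi]))

theorem Reg.det {ι : Type*} [Fintype ι] [DecidableEq ι] {A : (σ → ℂ) → Matrix ι ι ℂ}
    (h : ∀ i j, Reg x0 (fun x => A x i j)) : Reg x0 (fun x => (A x).det) := by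
  simp only [Matrix.det_apply']
  exact Reg.sum _ fun s _ => (Reg.const _).mul (Reg.prod _ fun i _ => h _ _)

theorem Reg.matInv {ι : Type*} [Fintype ι] [DecidableEq ι] {A : (σ → ℂ) → Matrix ι ι ℂ}
    (h : ∀ i j, Reg x0 (fun x => A x i j)) (h0 : (A x0).det ≠ 0) (i j : ι) :
    Reg x0 (fun x => (A x)⁻¹ i j) := by
  simp only [Matrix.inv_def, Matrix.smul_apply, Ring.inverse_eq_inv', smul_eq_mul,
    Matrix.adjugate_apply]
  refine ((Reg.det h).inv h0).mul (Reg.det fun k l => ?_)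
  by_cases hk : k = j
  · subst hk
    simpa using Reg.const _
  · simpa [Matrix.updateRow_ne hk] using h k l

theorem Reg.mulVec {ι κ : Type*} [Fintype κ] {A : (σ → ℂ) → Matrix ι κ ℂ}
    {v : (σ → ℂ) → κ → ℂ} (h : ∀ i j, Reg x0 (fun x => A x i j))
    (hv : ∀ j, Reg x0 (fun x => v x j)) (i : ι) :
    Reg x0 (fun x => ((A x).mulVec (v x)) i) := by
  simp only [Matrix.mulVec, dotProduct]
  exact Reg.sum _ fun j _ => (h i j).mul (hv j)

/-- Polynomial-valued functions with regular coefficients. -/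
def RegP (x0 : σ → ℂ) (f : (σ → ℂ) → Polynomial ℂ) : Prop :=
  ∀ e, Reg x0 (fun x => (f x).coeff e)

variable {P Q : (σ → ℂ) → Polynomial ℂ}

theorem RegP.const (c : Polynomial ℂ) : RegP x0 (fun _ => c) := fun _ => Reg.const _

theorem RegP.C (hf : Reg x0 f) : RegP x0 (fun x => Polynomial.C (f x)) := fun e => by
  by_cases he : e = 0
  · simpa [he] using hf
  · simpa [Polynomial.coeff_C, he] using Reg.const 0

theorem RegP.add (hf : RegP x0 P) (hg : RegP x0 Q) : RegP x0 (fun x => P x + Q x) := fun e => by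
  simpa using (hf e).add (hg e)

theorem RegP.sub (hf : RegP x0 P) (hg : RegP x0 Q) : RegP x0 (fun x => P x - Q x) := fun e => by
  simpa using (hf e).sub (hg e)

theorem RegP.mul (hf : RegP x0 P) (hg : RegP x0 Q) : RegP x0 (fun x => P x * Q x) := fun e => by
  simp only [Polynomial.coeff_mul]
  exact Reg.sum _ fun i _ => (hf _).mul (hg _)

theorem RegP.derivative (hf : RegP x0 P) : RegP x0 (fun x => (P x).derivative) := fun e => by
  simp only [Polynomial.coeff_derivative]
  exact (hf _).mul (Reg.const _)

theorem RegP.sum {ι : Type*} (s : Finset ι) {f : ι → (σ → ℂ) → Polynomial ℂ}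
    (h : ∀ i ∈ s, RegP x0 (f i)) : RegP x0 (fun x => ∑ i ∈ s, f i x) := fun e => by
  simp only [Polynomial.finsetSum_coeff]
  exact Reg.sum _ fun i hi => h i hi e

theorem RegP.prod {ι : Type*} (s : Finset ι) {f : ι → (σ → ℂ) → Polynomial ℂ}
    (h : ∀ i ∈ s, RegP x0 (f i)) : RegP x0 (fun x => ∏ i ∈ s, f i x) := by
  classical
  induction s using Finset.induction_on with
  | empty => simpa using RegP.const 1
  | insert a s ha ih =>
    simp only [Finset.prod_insert ha]
    exact (h a (by simp)).mul (ih fun i hi => h i (by simp [hi]))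

theorem RegP.eval {n : ℕ} (hP : RegP x0 P) (hd : ∀ x, (P x).natDegree ≤ n) (hf : Reg x0 f) :
    Reg x0 (fun x => (P x).eval (f x)) := by
  have : (fun x => (P x).eval (f x)) =
      fun x => ∑ i ∈ Finset.range (n + 1), (P x).coeff i * ∏ _j ∈ Finset.range i, f x := by
    ext x
    rw [Polynomial.eval_eq_sum_range' (Nat.lt_succ_of_le (hd x))]
    simp
  rw [this]
  exact Reg.sum _ fun i _ => (hP i).mul (Reg.prod _ fun _ _ => hf)

theorem RegP.separable {n : ℕ} (hn : 1 ≤ n) (hP : RegP x0 P) (hd : ∀ x, (P x).natDegree ≤ n)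
    (h0 : (P x0).natDegree = n) (hs : (P x0).Separable) :
    ∀ᶠ x in ZN x0, (P x).Separable := by
  have hdd : ∀ x, (P x).derivative.natDegree ≤ n - 1 := fun x =>
    (Polynomial.natDegree_derivative_le _).trans (Nat.sub_le_sub_right (hd x) 1)
  have hr : Reg x0 (fun x => Polynomial.resultant (P x) (P x).derivative n (n-1)) := by
    unfold Polynomial.resultant
    refine Reg.det fun i j => ?_
    simp only [Polynomial.sylvester, Matrix.of_apply]
    refine Fin.addCases (fun j => ?_) (fun j => ?_) j
    · simp only [Fin.addCases_left]
      split_ifs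
      · exact hP.derivative _
      · exact Reg.const 0
    · simp only [Fin.addCases_right]
      split_ifs
      · exact hP _
      · exact Reg.const 0
  have h1 : Polynomial.resultant (P x0) (P x0).derivative n (n-1) ≠ 0 := by
    have := Polynomial.resultant_ne_zero _ _ hs
    rwa [Polynomial.natDegree_derivative, h0] at this
  filter_upwards [hr.ne h1] with x hx
  obtain ⟨p, q, hp, hq, e⟩ := Polynomial.exists_mul_add_mul_eq_C_resultant (P x) (P x).derivative
    (hd x) (hdd x) (by omega)
  set c := Polynomial.resultant (P x) (P x).derivative n (n-1)
  refine ⟨Polynomial.C c⁻¹ * p, Polynomial.C c⁻¹ * q, ?_⟩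
  have : Polynomial.C c⁻¹ * p * P x + Polynomial.C c⁻¹ * q * (P x).derivative
    = Polynomial.C c⁻¹ * (P x * p + (P x).derivative * q) := by ring
  rw [this, e, ← Polynomial.C_mul, inv_mul_cancel₀ hx, Polynomial.C_1]

end Reg

section Block

open Polynomial

/-- The product of all linear factors. -/
def exD {ι : Type*} [Fintype ι] (ρ : ι → ℂ) : ℂ[X] := ∏ a, (X - C (ρ a))

open Classical in
/-- The product of all linear factors but one. -/
def exN {ι : Type*} [Fintype ι] (ρ : ι → ℂ) (a : ι) : ℂ[X] :=
  ∏ b ∈ Finset.univ.erase a, (X - C (ρ b))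

variable {ι : Type*} [Fintype ι] {ρ : ι → ℂ}

theorem exN_mul (a : ι) : exN ρ a * (X - C (ρ a)) = exD ρ := by
  classical
  unfold exN exD
  convert Finset.prod_erase_mul _ _ (Finset.mem_univ a)

theorem exN_eval_mul (a : ι) (z : ℂ) : (exN ρ a).eval z * (z - ρ a) = (exD ρ).eval z := by
  rw [← exN_mul a]; simp

theorem exD_eval_ne {z : ℂ} (h : ∀ a, z ≠ ρ a) : (exD ρ).eval z ≠ 0 := by
  simp [exD, eval_prod, Finset.prod_ne_zero_iff, sub_ne_zero, h]

theorem exD_eval_self (a : ι) : (exD ρ).eval (ρ a) = 0 := by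
  rw [← exN_eval_mul a]; simp

theorem exN_eval_self_ne (hρ : Function.Injective ρ) (a : ι) : (exN ρ a).eval (ρ a) ≠ 0 := by
  classical
  simp only [exN, eval_prod, Finset.prod_ne_zero_iff]
  intro b hb
  simp only [Finset.mem_erase] at hb
  simp only [eval_sub, eval_X, eval_C, sub_ne_zero]
  exact fun h => hb.1 (hρ h).symm

theorem exN_eval_ne {a b : ι} (h : b ≠ a) : (exN ρ a).eval (ρ b) = 0 := by
  classical
  simp only [exN, eval_prod]
  exact Finset.prod_eq_zero (i := b) (by simp [h]) (by simp)

theorem exD_natDegree : (exD ρ).natDegree = Fintype.card ι := by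
  unfold exD; rw [natDegree_finsetProd_X_sub_C_eq_card]; simp

theorem exD_ne_zero : exD ρ ≠ 0 :=
  (monic_prod_of_monic _ _ fun a _ => monic_X_sub_C (ρ a)).ne_zero

theorem exD_monic : (exD ρ).Monic :=
  (monic_prod_of_monic _ _ fun a _ => monic_X_sub_C (ρ a))

theorem exN_natDegree_lt (a : ι) : (exN ρ a).natDegree + 1 = Fintype.card ι := by
  classical
  unfold exN; rw [natDegree_finsetProd_X_sub_C_eq_card]; simp
  have : 0 < Fintype.card ι := Fintype.card_pos_iff.2 ⟨a⟩
  omega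

theorem exD_separable (hρ : Function.Injective ρ) : (exD ρ).Separable :=
  separable_prod_X_sub_C_iff.2 hρ

theorem ex_indep (hρ : Function.Injective ρ) (l0 : ℂ) (l : ι → ℂ)
    (h : C l0 * exD ρ + ∑ a, C (l a) * exN ρ a = 0) : l0 = 0 ∧ ∀ a, l a = 0 := by
  have h2 : ∀ a, l a = 0 := by
    intro a
    have := congrArg (eval (ρ a)) h
    simp only [eval_add, eval_mul, eval_C, exD_eval_self, mul_zero, eval_finsetSum, zero_add,
      eval_zero] at this
    rw [Finset.sum_eq_single a] at this
    · simpa [exN_eval_self_ne hρ] using this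
    · intro b _ hb
      rw [exN_eval_ne hb.symm, mul_zero]
    · simp
  refine ⟨?_, h2⟩
  simpa [h2, exD_ne_zero] using h

theorem lagr {m : ℕ} {t : Fin (m + 1) → ℂ} (ht : Function.Injective t) {f : ℂ[X]}
    (hf : f.natDegree ≤ m) :
    f = ∑ k, C (f.eval (t k) / (exN t k).eval (t k)) * exN t k := by
  rw [← sub_eq_zero]
  apply eq_zero_of_natDegree_lt_card_of_eval_eq_zero _ ht
  · intro i
    rw [eval_sub, eval_finsetSum, Finset.sum_eq_single i]
    · have := exN_eval_self_ne ht i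
      simp [this]
    · intro b _ hb
      rw [eval_mul, exN_eval_ne hb.symm, mul_zero]
    · simp
  · simp only [Fintype.card_fin]
    apply Nat.lt_succ_of_le
    refine (natDegree_sub_le _ _).trans (max_le hf ?_)
    refine natDegree_sum_le_of_forall_le _ _ fun k _ => ?_
    refine (natDegree_C_mul_le _ _).trans ?_
    have := exN_natDegree_lt (ρ := t) k
    simp at this
    omega

variable {m : ℕ}

/-- Homogenized point. -/
def qh (q : Fin m → ℂ) : Fin (m + 1) → ℂ := Fin.cons 1 q

/-- The matrix of the first `m+1` points. -/
def Qm (q : ℕ → Fin m → ℂ) : Matrix (Fin (m + 1)) (Fin (m + 1)) ℂ := fun r k => qh (q k) r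

/-- Coordinates of the `i`-th point in the basis of the first `m+1`. -/
def cf (q : ℕ → Fin m → ℂ) (i : ℕ) : Fin (m + 1) → ℂ := (Qm q)⁻¹.mulVec (qh (q i))

theorem cf_spec {q : ℕ → Fin m → ℂ} (h : (Qm q).det ≠ 0) (i : ℕ) :
    ∑ k, cf q i k = 1 ∧ ∀ a, ∑ k, cf q i k * q k a = q i a := by
  have h1 : (Qm q).mulVec (cf q i) = qh (q i) := by
    rw [cf, Matrix.mulVec_mulVec, Matrix.mul_nonsing_inv _ (isUnit_iff_ne_zero.2 h),
      Matrix.one_mulVec]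
  constructor
  · have := congrFun h1 0
    simpa [Matrix.mulVec, dotProduct, Qm, qh] using this
  · intro a
    have := congrFun h1 a.succ
    simpa [Matrix.mulVec, dotProduct, Qm, qh, mul_comm] using this

theorem cf_unique {q : ℕ → Fin m → ℂ} (h : (Qm q).det ≠ 0) (i : ℕ) (c : Fin (m + 1) → ℂ)
    (h1 : ∑ k, c k = 1) (h2 : ∀ a, ∑ k, c k * q k a = q i a) : cf q i = c := by
  have h1 : (Qm q).mulVec c = qh (q i) := by
    ext r
    refine Fin.cases ?_ (fun a => ?_) r
    · simpa [Matrix.mulVec, dotProduct, Qm, qh] using h1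
    · simpa [Matrix.mulVec, dotProduct, Qm, qh, mul_comm] using h2 a
  rw [cf, ← h1, Matrix.mulVec_mulVec, Matrix.nonsing_inv_mul _ (isUnit_iff_ne_zero.2 h),
      Matrix.one_mulVec]

section ex
variable {ρ : Fin m → ℂ} {τ : ℕ → ℂ} {q : ℕ → Fin m → ℂ}

theorem ex_q_mul (hτρ : ∀ i a, τ i ≠ ρ a)
    (hq : ∀ i a, q i a = 1 / (τ i - ρ a)) (i : ℕ) (a : Fin m) :
    (exN ρ a).eval (τ i) = q i a * (exD ρ).eval (τ i) := by
  rw [hq, ← exN_eval_mul a]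
  have := sub_ne_zero.2 (hτρ i a)
  field_simp

theorem ex_det (hρ : Function.Injective ρ) (hτ : Function.Injective τ) (hτρ : ∀ i a, τ i ≠ ρ a)
    (hq : ∀ i a, q i a = 1 / (τ i - ρ a)) : (Qm q).det ≠ 0 := by
  intro h0
  obtain ⟨v, hv, hv0⟩ := Matrix.exists_vecMul_eq_zero_iff.2 h0
  have key : C (v 0) * exD ρ + ∑ a, C (v (Fin.succ a)) * exN ρ a = 0 := by
    apply eq_zero_of_natDegree_lt_card_of_eval_eq_zero (ι := Fin (m + 1)) _
      (f := fun k => τ k) (fun a b h => Fin.ext (hτ h))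
    · intro k
      have := congrFun hv0 k
      simp only [Matrix.vecMul, dotProduct, Qm, qh, Fin.sum_univ_succ, Fin.cons_zero,
        Fin.cons_succ, Pi.zero_apply] at this
      simp only [eval_add, eval_mul, eval_C, eval_finsetSum, ex_q_mul hτρ hq, ← mul_assoc]
      rw [← Finset.sum_mul, ← add_mul]
      rw [mul_one] at this
      rw [this, zero_mul]
    · simp only [Fintype.card_fin]
      apply Nat.lt_succ_of_le
      refine (natDegree_add_le _ _).trans (max_le ?_ ?_)
      · refine (natDegree_C_mul_le _ _).trans ?_
        simp [exD_natDegree]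
      · refine natDegree_sum_le_of_forall_le _ _ fun k _ => ?_
        refine (natDegree_C_mul_le _ _).trans ?_
        have := exN_natDegree_lt (ρ := ρ) k
        simp at this
        omega
  obtain ⟨h1, h2⟩ := ex_indep hρ _ _ key
  apply hv
  ext r
  exact Fin.cases h1 h2 r

/-- The Lagrange coefficients of the example. -/
def ek (ρ : Fin m → ℂ) (τ : ℕ → ℂ) (k : Fin (m + 1)) : ℂ :=
  (exD ρ).eval (τ k) / (exN (fun l : Fin (m + 1) => τ l) k).eval (τ k)

theorem ek_ne (hτ : Function.Injective τ) (hτρ : ∀ i a, τ i ≠ ρ a) (k : Fin (m + 1)) :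
    ek ρ τ k ≠ 0 :=
  div_ne_zero (exD_eval_ne (hτρ _))
    (exN_eval_self_ne (ρ := fun l : Fin (m + 1) => τ l) (fun a b h => Fin.ext (hτ h)) k)

theorem ek_D (hτ : Function.Injective τ) :
    exD ρ = ∑ k, C (ek ρ τ k) * exN (fun l : Fin (m + 1) => τ l) k :=
  lagr (t := fun l : Fin (m + 1) => τ l) (fun a b h => Fin.ext (hτ h)) (by simp [exD_natDegree])

theorem ek_N (hτ : Function.Injective τ) (hτρ : ∀ i a, τ i ≠ ρ a)
    (hq : ∀ i a, q i a = 1 / (τ i - ρ a)) (a : Fin m) :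
    exN ρ a = ∑ k : Fin (m + 1), C (ek ρ τ k * q k a) * exN (fun l : Fin (m + 1) => τ l) k := by
  have h := lagr (t := fun l : Fin (m + 1) => τ l) (fun a b h => Fin.ext (hτ h)) (f := exN ρ a)
    (by have := exN_natDegree_lt (ρ := ρ) a; simp at this; omega)
  conv_lhs => rw [h]
  refine Finset.sum_congr rfl fun k _ => ?_
  rw [ex_q_mul hτρ hq, ek]
  congr 2
  ring

theorem cf_ex (hρ : Function.Injective ρ) (hτ : Function.Injective τ) (hτρ : ∀ i a, τ i ≠ ρ a)
    (hq : ∀ i a, q i a = 1 / (τ i - ρ a)) (i : ℕ) (hi : m < i) (k : Fin (m + 1)) :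
    cf q i k * (τ i - τ k) =
      ek ρ τ k * ((exD (fun l : Fin (m + 1) => τ l)).eval (τ i) / (exD ρ).eval (τ i)) := by
  have hne : ∀ k : Fin (m + 1), τ i - τ k ≠ 0 := fun k => sub_ne_zero.2 fun h => by
    have := hτ h
    omega
  have hD := exD_eval_ne (hτρ i)
  have hE : ∀ k : Fin (m + 1), (exN (fun l : Fin (m + 1) => τ l) k).eval (τ i) =
      (exD (fun l : Fin (m + 1) => τ l)).eval (τ i) / (τ i - τ k) := fun k => by
    rw [← exN_eval_mul k]
    have := hne k
    field_simp
  have := cf_unique (ex_det hρ hτ hτρ hq) i (fun k => ek ρ τ k *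
    ((exD (fun l : Fin (m + 1) => τ l)).eval (τ i) / (exD ρ).eval (τ i)) / (τ i - τ k)) ?_ ?_
  · rw [this]
    have := hne k
    field_simp
  · have h := congrArg (eval (τ i)) (ek_D (ρ := ρ) hτ)
    simp only [eval_finsetSum, eval_mul, eval_C, hE] at h
    apply mul_left_cancel₀ hD
    rw [mul_one]
    conv_rhs => rw [h]
    rw [Finset.mul_sum]
    refine Finset.sum_congr rfl fun k _ => ?_
    field_simp
  · intro a
    have h := congrArg (eval (τ i)) (ek_N hτ hτρ hq a)
    simp only [eval_finsetSum, eval_mul, eval_C, hE] at h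
    rw [ex_q_mul hτρ hq] at h
    apply mul_left_cancel₀ hD
    rw [mul_comm _ (q i a), h, Finset.mul_sum]
    refine Finset.sum_congr rfl fun k _ => ?_
    field_simp

end ex

variable {σ : Type*} {x0 : σ → ℂ}

/-- A regular family of block solutions. -/
def BlockSol (x0 : σ → ℂ) (ρ : Fin m → ℂ) (S : ℕ → Prop) (t : ℕ → (σ → ℂ) → ℂ)
    (q : ℕ → (σ → ℂ) → Fin m → ℂ) : Prop :=
  ∃ (D : (σ → ℂ) → ℂ[X]) (N : Fin m → (σ → ℂ) → ℂ[X]), RegP x0 D ∧ (∀ a, RegP x0 (N a)) ∧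
    D x0 = exD ρ ∧ (∀ a, N a x0 = exN ρ a) ∧ (∀ x, (D x).natDegree ≤ m) ∧
    (∀ a x, (N a x).natDegree ≤ m) ∧
    ∀ᶠ x in ZN x0, ∀ i, S i → ∀ a, (N a x).eval (t i x) = q i x a * (D x).eval (t i x)

theorem Reg.cf {q : ℕ → (σ → ℂ) → Fin m → ℂ} (hq : ∀ i a, Reg x0 (fun x => q i x a))
    (h0 : (Qm (fun i => q i x0)).det ≠ 0) (i : ℕ) (k : Fin (m + 1)) :
    Reg x0 (fun x => cf (fun i => q i x) i k) := by
  have h : ∀ i r, Reg x0 (fun x => qh (q i x) r) := fun i r => by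
    refine Fin.cases ?_ (fun a => ?_) r
    · simpa [qh] using Reg.const 1
    · simpa [qh] using hq i a
  exact Reg.mulVec (A := fun x => (Qm (fun i => q i x))⁻¹) (v := fun x => qh (q i x))
    (Reg.matInv (A := fun x => Qm (fun i => q i x)) (fun r j => h j r) h0) (h i) k

theorem block_core {ρ : Fin m → ℂ} {τ : ℕ → ℂ} {q : ℕ → (σ → ℂ) → Fin m → ℂ}
    {t : ℕ → (σ → ℂ) → ℂ}
    (hρ : Function.Injective ρ) (hτ : Function.Injective τ) (hτρ : ∀ i a, τ i ≠ ρ a)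
    (hq : ∀ i a, Reg x0 (fun x => q i x a)) (hq0 : ∀ i a, q i x0 a = 1 / (τ i - ρ a))
    (ht : ∀ i, Reg x0 (t i)) (ht0 : ∀ i, t i x0 = τ i) (S : ℕ → Prop)
    (hS : ∀ᶠ x in ZN x0, ∀ i, S i → i ≤ m ∨ ∃ μ : ℂ, ∀ k : Fin (m + 1),
      cf (fun i => q i x) (m + 1) k * (t (m + 1) x - t k x) =
        μ * (cf (fun i => q i x) i k * (t i x - t k x))) :
    BlockSol x0 ρ S t q := by
  have hdet := ex_det hρ hτ hτρ hq0
  obtain ⟨κ, hκ⟩ : ∃ κ, κ = (exD (fun l : Fin (m + 1) => τ l)).eval (τ (m + 1)) /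
    (exD ρ).eval (τ (m + 1)) := ⟨_, rfl⟩
  have hκ0 : κ ≠ 0 := by
    rw [hκ]
    refine div_ne_zero (exD_eval_ne fun k h => ?_) (exD_eval_ne (hτρ _))
    have := hτ h
    omega
  obtain ⟨c, hc⟩ : ∃ c : Fin (m + 1) → (σ → ℂ) → ℂ, c = fun k x => κ⁻¹ *
    (cf (fun i => q i x) (m + 1) k * (t (m + 1) x - t k x)) := ⟨_, rfl⟩
  have hcr : ∀ k, Reg x0 (c k) := fun k => by
    rw [hc]
    exact (Reg.const _).mul ((Reg.cf hq hdet _ _).mul ((ht _).sub (ht _)))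
  have hc0 : ∀ k, c k x0 = ek ρ τ k := fun k => by
    rw [hc]
    simp only [ht0]
    rw [cf_ex hρ hτ hτρ hq0 _ (Nat.lt_succ_self m), ← hκ]
    field_simp
  have hNr : ∀ k : Fin (m + 1), RegP x0 (fun x => exN (fun l : Fin (m + 1) => t l x) k) :=
    fun k => RegP.prod _ fun i _ => (RegP.const _).sub (RegP.C (ht i))
  have hdeg : ∀ (k : Fin (m + 1)) x (z : ℂ),
      (C z * exN (fun l : Fin (m + 1) => t l x) k).natDegree ≤ m := fun k x z => by
    refine (natDegree_C_mul_le _ _).trans ?_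
    have := exN_natDegree_lt (ρ := fun l : Fin (m + 1) => t l x) k
    simp at this
    omega
  refine ⟨fun x => ∑ k, C (c k x) * exN (fun l : Fin (m + 1) => t l x) k,
    fun a x => ∑ k : Fin (m + 1), C (c k x * q k x a) * exN (fun l : Fin (m + 1) => t l x) k,
    ?_, ?_, ?_, ?_, ?_, ?_, ?_⟩
  · exact RegP.sum _ fun k _ => (RegP.C (hcr k)).mul (hNr k)
  · exact fun a => RegP.sum _ fun k _ => (RegP.C ((hcr k).mul (hq _ _))).mul (hNr k)
  · simp only [ht0, hc0]
    exact (ek_D hτ).symm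
  · intro a
    simp only [ht0, hc0]
    exact (ek_N hτ hτρ hq0 a).symm
  · exact fun x => natDegree_sum_le_of_forall_le _ _ fun k _ => hdeg _ _ _
  · exact fun a x => natDegree_sum_le_of_forall_le _ _ fun k _ => hdeg _ _ _
  · have hdr : Reg x0 (fun x => (Qm (fun i => q i x)).det) := by
      refine Reg.det fun r k => ?_
      refine Fin.cases ?_ (fun a => ?_) r
      · simpa [Qm, qh] using Reg.const 1
      · simpa [Qm, qh] using hq k a
    filter_upwards [hS, hdr.ne hdet] with x hx hdx i hi a
    simp only [eval_finsetSum, eval_mul, eval_C]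
    rcases hx i hi with h | ⟨μ, h⟩
    · obtain ⟨k, rfl⟩ : ∃ k : Fin (m + 1), (k : ℕ) = i := ⟨⟨i, by omega⟩, rfl⟩
      rw [Finset.sum_eq_single k, Finset.sum_eq_single k]
      · ring
      · intro b _ hb
        rw [exN_eval_ne (ρ := fun l : Fin (m + 1) => t l x) hb.symm, mul_zero]
      · simp
      · intro b _ hb
        rw [exN_eval_ne (ρ := fun l : Fin (m + 1) => t l x) hb.symm, mul_zero]
      · simp
    · obtain ⟨h1, h2⟩ := cf_spec hdx i
      have hk : ∀ k : Fin (m + 1), c k x * (exN (fun l : Fin (m + 1) => t l x) k).eval (t i x) =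
          κ⁻¹ * μ * (exD (fun l : Fin (m + 1) => t l x)).eval (t i x) *
            cf (fun i => q i x) i k := by
        intro k
        rw [hc]
        beta_reduce
        rw [h, ← exN_eval_mul k]
        ring
      simp only [hk, ← Finset.mul_sum, h1, mul_one]
      rw [← h2 a, Finset.sum_mul]
      refine Finset.sum_congr rfl fun k _ => ?_
      rw [mul_right_comm, hk]
      ring

theorem block_one {ρ : Fin m → ℂ} {τ : ℕ → ℂ} {q : ℕ → (σ → ℂ) → Fin m → ℂ}
    {t : ℕ → (σ → ℂ) → ℂ}
    (hρ : Function.Injective ρ) (hτ : Function.Injective τ) (hτρ : ∀ i a, τ i ≠ ρ a)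
    (hq : ∀ i a, Reg x0 (fun x => q i x a)) (hq0 : ∀ i a, q i x0 a = 1 / (τ i - ρ a))
    (ht : ∀ i, Reg x0 (t i)) (ht0 : ∀ i, t i x0 = τ i) {s : ℕ} (hs : s ≤ m + 2) :
    BlockSol x0 ρ (fun i => i < s) t q := by
  refine block_core hρ hτ hτρ hq hq0 ht ht0 _ (Filter.Eventually.of_forall fun x i hi => ?_)
  by_cases h : i ≤ m
  · exact Or.inl h
  · obtain rfl : i = m + 1 := by omega
    exact Or.inr ⟨1, fun k => by simp⟩

theorem block_two {ρ : Fin m → ℂ} {τ : ℕ → ℂ} {q : ℕ → (σ → ℂ) → Fin m → ℂ}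
    (hρ : Function.Injective ρ) (hτ : Function.Injective τ) (hτρ : ∀ i a, τ i ≠ ρ a)
    (hq : ∀ i a, Reg x0 (fun x => q i x a)) (hq0 : ∀ i a, q i x0 a = 1 / (τ i - ρ a))
    {s : ℕ} (hs : s ≤ m + 3) :
    ∃ t : ℕ → (σ → ℂ) → ℂ, (∀ i, Reg x0 (t i)) ∧ (∀ i, t i x0 = τ i) ∧
    BlockSol x0 ρ (fun i => i < s) t q := by
  have hdet := ex_det hρ hτ hτρ hq0
  obtain ⟨K, hK⟩ : ∃ K : ℕ → ℂ, K = fun i => (exD (fun l : Fin (m + 1) => τ l)).eval (τ i) /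
    (exD ρ).eval (τ i) := ⟨_, rfl⟩
  have hK0 : ∀ i, m < i → K i ≠ 0 := by
    intro i hi
    rw [hK]
    refine div_ne_zero (exD_eval_ne fun k h => ?_) (exD_eval_ne (hτρ _))
    have := hτ h
    omega
  have hcf : ∀ i, m < i → ∀ k : Fin (m + 1), cf (fun i => q i x0) i k * (τ i - τ k) =
      ek ρ τ k * K i := fun i hi k => by
    rw [hK]; exact cf_ex hρ hτ hτρ hq0 i hi k
  have h1 := hK0 (m + 1) (by omega)
  have h2 := hK0 (m + 2) (by omega)
  obtain ⟨μ, hμ⟩ : ∃ μ, μ = K (m + 1) / K (m + 2) := ⟨_, rfl⟩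
  have hμ0 : μ ≠ 0 := hμ ▸ div_ne_zero h1 h2
  obtain ⟨A, hA⟩ : ∃ A : Fin (m + 1) → (σ → ℂ) → ℂ,
    A = fun k x => cf (fun i => q i x) (m + 1) k := ⟨_, rfl⟩
  obtain ⟨B, hB⟩ : ∃ B : Fin (m + 1) → (σ → ℂ) → ℂ,
    B = fun k x => cf (fun i => q i x) (m + 2) k := ⟨_, rfl⟩
  have hAr : ∀ k, Reg x0 (A k) := fun k => by rw [hA]; exact Reg.cf hq hdet _ _
  have hBr : ∀ k, Reg x0 (B k) := fun k => by rw [hB]; exact Reg.cf hq hdet _ _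
  have hA0 : ∀ k, A k x0 * (τ (m + 1) - τ k) = μ * (B k x0 * (τ (m + 2) - τ k)) := by
    intro k
    rw [hA, hB]
    beta_reduce
    rw [hcf _ (by omega), hcf _ (by omega), hμ]
    field_simp
  have hden : ∀ k, μ * B k x0 - A k x0 ≠ 0 := by
    intro k h
    have hA1 : A k x0 ≠ 0 := by
      intro h
      have := hcf (m + 1) (by omega) k
      rw [hA] at h
      beta_reduce at h
      rw [h, zero_mul] at this
      exact mul_ne_zero (ek_ne hτ hτρ k) h1 this.symm
    have h3 : A k x0 * (τ (m + 1) - τ (m + 2)) = 0 := by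
      linear_combination hA0 k + (τ (m + 2) - τ k) * h
    rcases mul_eq_zero.1 h3 with h | h
    · exact hA1 h
    · have := hτ (sub_eq_zero.1 h)
      omega
  obtain ⟨t, ht⟩ : ∃ t : ℕ → (σ → ℂ) → ℂ, t = fun i x => if h : i < m + 1 then
      (μ * B ⟨i, h⟩ x * τ (m + 2) - A ⟨i, h⟩ x * τ (m + 1)) / (μ * B ⟨i, h⟩ x - A ⟨i, h⟩ x)
      else τ i := ⟨_, rfl⟩
  have htr : ∀ i, Reg x0 (t i) := by
    intro i
    rw [ht]
    by_cases h : i < m + 1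
    · simp only [h, dite_true]
      exact ((((Reg.const μ).mul (hBr _)).mul (Reg.const _)).sub ((hAr _).mul (Reg.const _))).div
        (((Reg.const μ).mul (hBr _)).sub (hAr _)) (hden _)
    · simp only [h, dite_false]
      exact Reg.const _
  have ht0 : ∀ i, t i x0 = τ i := by
    intro i
    rw [ht]
    by_cases h : i < m + 1
    · simp only [h, dite_true]
      rw [div_eq_iff (hden _)]
      have := hA0 ⟨i, h⟩
      simp only at this
      linear_combination - this
    · simp only [h, dite_false]
  refine ⟨t, htr, ht0, block_core hρ hτ hτρ hq hq0 htr ht0 _ ?_⟩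
  have hev : ∀ᶠ x in ZN x0, ∀ k, μ * B k x - A k x ≠ 0 := by
    rw [Filter.eventually_all]
    exact fun k => (((Reg.const μ).mul (hBr k)).sub (hAr k)).ne (hden k)
  filter_upwards [hev] with x hx i hi
  by_cases h : i ≤ m
  · exact Or.inl h
  by_cases h' : i = m + 1
  · subst h'
    exact Or.inr ⟨1, fun k => by simp⟩
  obtain rfl : i = m + 2 := by omega
  refine Or.inr ⟨μ, fun k => ?_⟩
  have e1 : t (m + 1) x = τ (m + 1) := by rw [ht]; simp
  have e2 : t (m + 2) x = τ (m + 2) := by rw [ht]; simp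
  have e3 : t k x * (μ * B k x - A k x) = μ * B k x * τ (m + 2) - A k x * τ (m + 1) := by
    rw [ht]
    simp only [Fin.is_lt, dite_true, Fin.eta]
    exact div_mul_cancel₀ _ (hx k)
  rw [e1, e2]
  have eA : cf (fun i => q i x) (m + 1) k = A k x := by rw [hA]
  have eB : cf (fun i => q i x) (m + 2) k = B k x := by rw [hB]
  rw [eA, eB]
  linear_combination e3

theorem block_three (hm : m = 1) {ρ : Fin m → ℂ} {τ : ℕ → ℂ} {q : ℕ → (σ → ℂ) → Fin m → ℂ}
    (hτρ : ∀ i a, τ i ≠ ρ a)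
    (hq : ∀ i a, Reg x0 (fun x => q i x a)) (hq0 : ∀ i a, q i x0 a = 1 / (τ i - ρ a))
    (s : ℕ) :
    ∃ t : ℕ → (σ → ℂ) → ℂ, (∀ i, Reg x0 (t i)) ∧ (∀ i, t i x0 = τ i) ∧
    BlockSol x0 ρ (fun i => i < s) t q := by
  subst hm
  have hne : ∀ i, q i x0 0 ≠ 0 := fun i => by
    rw [hq0]; exact one_div_ne_zero (sub_ne_zero.2 (hτρ i 0))
  refine ⟨fun i x => ρ 0 + (q i x 0)⁻¹, fun i => (Reg.const _).add ((hq i 0).inv (hne i)),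
    fun i => by simp [hq0], fun _ => exD ρ, fun a _ => exN ρ a, RegP.const _,
    fun a => RegP.const _, rfl, fun _ => rfl, fun _ => by simp [exD_natDegree], fun a _ => ?_, ?_⟩
  · have := exN_natDegree_lt (ρ := ρ) a
    rw [Fintype.card_fin] at this
    show (exN ρ a).natDegree ≤ 1
    omega
  · have : ∀ᶠ x in ZN x0, ∀ i : Fin s, q i x 0 ≠ 0 := by
      rw [Filter.eventually_all]
      exact fun i => (hq i 0).ne (hne i)
    filter_upwards [this] with x hx i hi a
    have := hx ⟨i, hi⟩
    simp only at this
    obtain rfl : a = 0 := Subsingleton.elim _ _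
    rw [← exN_eval_mul 0]
    rw [add_sub_cancel_left]
    field_simp

end Block

section Geom

open Polynomial

theorem span_block {r n : ℕ} {nv : Fin r → ℕ} (ε : Option ((j : Fin r) × Fin (nv j)) ≃ Fin (n + 1))
    {T : Matrix (Fin (n + 1)) (Fin (n + 1)) ℂ} (hT : T.det ≠ 0)
    {B : (j : Fin r) → Matrix (Fin (n + 1)) (Fin (nv j)) ℂ}
    (hB : ∀ j a k, T k (ε (some ⟨j, a⟩)) = B j k a) (j : Fin r) (u : Fin (n + 1) → ℂ) :
    T.mulVec u ∈ Submodule.span ℂ (Set.range fun a => fun k => B j k a) ↔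
      ∀ o, (∀ a, o ≠ some ⟨j, a⟩) → u (ε o) = 0 := by
  have hcol : ∀ a, T.mulVec (Pi.single (ε (some ⟨j, a⟩)) 1) = fun k => B j k a := fun a => by
    rw [Matrix.mulVec_single_one]
    ext k
    exact hB j a k
  have hinj : Function.Injective T.mulVec :=
    Matrix.mulVec_injective_of_isUnit ((Matrix.isUnit_iff_isUnit_det _).2 (isUnit_iff_ne_zero.2 hT))
  constructor
  · intro h
    obtain ⟨c, hc⟩ := (Submodule.mem_span_range_iff_exists_fun ℂ).1 h
    have : u = ∑ a, c a • Pi.single (ε (some ⟨j, a⟩)) (1 : ℂ) := by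
      apply hinj
      rw [← hc, Matrix.mulVec_sum]
      exact Finset.sum_congr rfl fun a _ => by rw [Matrix.mulVec_smul, hcol]
    intro o ho
    rw [this, Finset.sum_apply]
    refine Finset.sum_eq_zero fun a _ => ?_
    rw [Pi.smul_apply, Pi.single_eq_of_ne (fun h => ho a (ε.injective h)), smul_zero]
  · intro h
    have : u = ∑ k, u k • Pi.single k (1 : ℂ) := by
      ext l
      simp [Finset.sum_apply, Pi.single_apply]
    rw [this, Matrix.mulVec_sum]
    refine Submodule.sum_mem _ fun k _ => ?_
    rw [Matrix.mulVec_smul]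
    by_cases hk : ∃ a, k = ε (some ⟨j, a⟩)
    · obtain ⟨a, rfl⟩ := hk
      rw [hcol]
      exact Submodule.smul_mem _ _ (Submodule.subset_span ⟨a, rfl⟩)
    · have := h (ε.symm k) (fun a ha => hk ⟨a, by rw [← ha]; simp⟩)
      rw [Equiv.apply_symm_apply] at this
      rw [this, zero_smul]
      exact Submodule.zero_mem _

theorem veron_affine (n : ℕ) (v : Fin 2 → ℂ) (h : v 1 ≠ 0) :
    veron n v = v 1 ^ n • veron n ![v 0 / v 1, 1] := by
  ext k
  have hk : n = (k : ℕ) + (n - (k : ℕ)) := by omega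
  simp only [veron, Pi.smul_apply, smul_eq_mul, Matrix.cons_val_zero, Matrix.cons_val_one,
    one_pow, mul_one, div_pow]
  have e : v 1 ^ n = v 1 ^ (k : ℕ) * v 1 ^ (n - (k : ℕ)) := by rw [← pow_add, ← hk]
  rw [e]
  field_simp

theorem veron_inf (n : ℕ) (v : Fin 2 → ℂ) (h : v 1 = 0) :
    veron n v = v 0 ^ n • Pi.single (Fin.last n) 1 := by
  ext k
  by_cases hk : k = Fin.last n
  · subst hk
    simp [veron]
  · have : n - (k : ℕ) ≠ 0 := by
      have := Fin.val_lt_last hk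
      omega
    simp [veron, h, this, hk]

theorem veron_coeff {n : ℕ} {ι : Type*} (H : ι → ℂ[X]) (hd : ∀ k, (H k).natDegree ≤ n) (t : ℂ) :
    (Matrix.of fun (k : ι) (e : Fin (n + 1)) => (H k).coeff e).mulVec (veron n ![t, 1]) =
      fun k => (H k).eval t := by
  ext k
  simp only [Matrix.mulVec, dotProduct, veron, Matrix.of_apply, Matrix.cons_val_zero,
    Matrix.cons_val_one, one_pow, mul_one]
  rw [eval_eq_sum_range' (Nat.lt_succ_of_le (hd k)), ← Fin.sum_univ_eq_sum_range
    (fun e => (H k).coeff e * t ^ e)]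

theorem veron_ne (n : ℕ) (t : ℂ) : veron n ![t, 1] ≠ 0 := by
  intro h
  have := congrFun h 0
  simp [veron] at this

theorem geom {r n s : ℕ} (hn1 : 1 ≤ n) {nv : Fin r → ℕ} (hn : n = ∑ j, nv j)
    (ε : Option ((j : Fin r) × Fin (nv j)) ≃ Fin (n + 1))
    {T : Matrix (Fin (n + 1)) (Fin (n + 1)) ℂ} (hT : T.det ≠ 0)
    {B : (j : Fin r) → Matrix (Fin (n + 1)) (Fin (nv j)) ℂ}
    (hB : ∀ j a k, T k (ε (some ⟨j, a⟩)) = B j k a)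
    (P : Fin s → Matrix (Fin (n + 1)) (Fin 1) ℂ)
    (D : Fin r → ℂ[X]) (H : Option ((j : Fin r) × Fin (nv j)) → ℂ[X])
    (hD : ∀ j, (D j).natDegree ≤ nv j) (hd : ∀ o, (H o).natDegree ≤ n)
    (h0 : H none = ∏ j, D j)
    (hdvd : ∀ i j a, i ≠ j → D i ∣ H (some ⟨j, a⟩))
    (hdet : (Matrix.of fun (k e : Fin (n + 1)) => (H (ε.symm k)).coeff e).det ≠ 0)
    (hsep : (H none).Separable) (hlc : (H none).coeff n ≠ 0)
    (hP : ∀ i, ∃ c t : ℂ, (fun k => P i k 0) =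
      T.mulVec (c • fun k => (H (ε.symm k)).eval t)) :
    ∃ C : Set (PP n), IsRNC n C ∧ (∀ i, projSet (P i) ⊆ C) ∧
        ∀ j, (C ∩ projSet (B j)).ncard = nv j := by
  obtain ⟨M', hM'⟩ : ∃ M' : Matrix (Fin (n + 1)) (Fin (n + 1)) ℂ,
    M' = (Matrix.of fun (k e : Fin (n + 1)) => (H (ε.symm k)).coeff e) := ⟨_, rfl⟩
  rw [← hM'] at hdet
  have hev : ∀ t, M'.mulVec (veron n ![t, 1]) = fun k => (H (ε.symm k)).eval t := fun t => by
    rw [hM']; exact veron_coeff (fun k => H (ε.symm k)) (fun k => hd _) t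
  have hdetM : IsUnit (T * M').det := by
    rw [Matrix.det_mul]; exact isUnit_iff_ne_zero.2 (mul_ne_zero hT hdet)
  have hinj' : Function.Injective M'.mulVec :=
    Matrix.mulVec_injective_of_isUnit
      ((Matrix.isUnit_iff_isUnit_det _).2 (isUnit_iff_ne_zero.2 hdet))
  have hinj : Function.Injective (T * M').mulVec :=
    Matrix.mulVec_injective_of_isUnit ((Matrix.isUnit_iff_isUnit_det _).2 hdetM)
  have hne : ∀ t, (T * M').mulVec (veron n ![t, 1]) ≠ 0 := fun t h =>
    veron_ne n t (hinj (by rw [h, Matrix.mulVec_zero]))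
  have hHne : ∀ t, ¬ ∀ o, (H o).eval t = 0 := fun t h =>
    veron_ne n t (hinj' (by rw [hev, Matrix.mulVec_zero]; ext k; exact h _))
  refine ⟨{Q : PP n | ∃ v : Fin 2 → ℂ, v ≠ 0 ∧ ∃ c : ℂ, c ≠ 0 ∧
      Q.rep = c • (T * M').mulVec (veron n v)}, ⟨T * M', hdetM, rfl⟩, ?_, ?_⟩
  · intro i Q hQ
    obtain ⟨c, t, hct⟩ := hP i
    obtain ⟨l, hl⟩ := (Submodule.mem_span_range_iff_exists_fun ℂ).1 hQ
    simp only [Finset.univ_unique, Fin.default_eq_zero, Finset.sum_singleton] at hl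
    rw [hct, Matrix.mulVec_smul, smul_smul, ← hev, Matrix.mulVec_mulVec] at hl
    refine ⟨![t, 1], fun h => by simpa using congrFun h 1, l 0 * c, ?_, hl.symm⟩
    intro h
    rw [h, zero_smul] at hl
    exact Q.rep_nonzero hl.symm
  · intro j
    have hD0 : ∀ j, D j ≠ 0 := by
      have := hsep.ne_zero
      rw [h0, Finset.prod_ne_zero_iff] at this
      exact fun j => this j (Finset.mem_univ _)
    have hdegn : (H none).natDegree = n :=
      le_antisymm (hd _) (le_natDegree_of_ne_zero hlc)
    have hdegj : (D j).natDegree = nv j := by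
      rw [h0, natDegree_prod _ _ (fun j _ => hD0 j)] at hdegn
      rw [hn] at hdegn
      exact (Finset.sum_eq_sum_iff_of_le (fun j _ => hD j)).1 hdegn j (Finset.mem_univ _)
    have hsepj : (D j).Separable := hsep.of_dvd (h0 ▸ Finset.dvd_prod_of_mem _ (Finset.mem_univ j))
    have hcard : Set.ncard {t | (D j).eval t = 0} = nv j := by
      have : {t | (D j).eval t = 0} = ((D j).roots.toFinset : Set ℂ) := by
        ext t
        simp [hD0 j]
      rw [this, Set.ncard_coe_finset, Multiset.toFinset_card_of_nodup (nodup_roots hsepj), ← hdegj]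
      exact ((IsAlgClosed.splits (D j)).natDegree_eq_card_roots).symm
    have hφ : Function.Injective
        (fun t => (Projectivization.mk ℂ ((T * M').mulVec (veron n ![t, 1])) (hne t) : PP n)) := by
      intro t t' h
      obtain ⟨c, hc⟩ := (Projectivization.mk_eq_mk_iff' _ _ _ _ _).1 h
      rw [← Matrix.mulVec_smul] at hc
      have h3 := hinj hc
      have e0 := congrFun h3 0
      have e1 := congrFun h3 ⟨1, by omega⟩
      simp [veron] at e0 e1
      rw [e0, one_mul] at e1
      exact e1.symm
    refine Eq.trans ?_ hcard
    rw [← Set.ncard_image_of_injective _ hφ]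
    congr 1
    ext Q
    constructor
    · rintro ⟨⟨v, hv, c, hc, hQ⟩, hQj⟩
      have hu : T.mulVec (M'.mulVec (veron n v)) ∈
          Submodule.span ℂ (Set.range fun a => fun k => B j k a) := by
        have : Q.rep ∈ Submodule.span ℂ (Set.range fun a => fun k => B j k a) := hQj
        rw [hQ] at this
        rw [Matrix.mulVec_mulVec]
        exact (Submodule.smul_mem_iff _ hc).1 this
      rw [span_block ε hT hB] at hu
      have hv1 : v 1 ≠ 0 := by
        intro hv1
        have := hu none (by simp)
        have hv0 : v 0 ≠ 0 := by
          intro hv0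
          apply hv
          ext i
          fin_cases i
          · exact hv0
          · exact hv1
        rw [veron_inf n v hv1, Matrix.mulVec_smul, Matrix.mulVec_single_one, hM'] at this
        simp [hlc, hv0] at this
      obtain ⟨t, ht⟩ : ∃ t, t = v 0 / v 1 := ⟨_, rfl⟩
      have hvt := veron_affine n v hv1
      rw [← ht] at hvt
      rw [hvt, Matrix.mulVec_smul, hev] at hu
      simp only [Pi.smul_apply, Equiv.symm_apply_apply, smul_eq_mul, mul_eq_zero,
        pow_eq_zero_iff', hv1, false_and, false_or] at hu
      have hDj : (D j).eval t = 0 := by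
        have h1 := hu none (by simp)
        rw [h0, eval_prod, Finset.prod_eq_zero_iff] at h1
        obtain ⟨i, -, hi⟩ := h1
        by_cases hij : i = j
        · rw [← hij]; exact hi
        · exfalso
          apply hHne t
          rintro (_ | ⟨l, a⟩)
          · exact hu none (by simp)
          · by_cases hl : i = l
            · subst hl
              refine hu _ fun a' h => hij ?_
              simp only [Option.some.injEq, Sigma.mk.injEq] at h
              exact h.1
            · exact eval_eq_zero_of_dvd_of_eval_eq_zero (hdvd i l a hl) hi
      refine ⟨t, hDj, ?_⟩
      beta_reduce
      rw [← Q.mk_rep, Projectivization.mk_eq_mk_iff']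
      refine ⟨(c * v 1 ^ n)⁻¹, ?_⟩
      rw [hQ, hvt, Matrix.mulVec_smul, smul_smul, smul_smul, mul_assoc, inv_mul_cancel₀, one_smul]
      exact mul_ne_zero hc (pow_ne_zero _ hv1)
    · rintro ⟨t, ht, rfl⟩
      beta_reduce
      obtain ⟨c, hc⟩ := Projectivization.exists_smul_eq_mk_rep ℂ _ (hne t)
      refine ⟨⟨![t, 1], fun h => by simpa using congrFun h 1, c, c.ne_zero, hc.symm⟩, ?_⟩
      change _ ∈ Submodule.span ℂ _
      rw [← hc]
      rw [Units.smul_def]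
      refine Submodule.smul_mem _ _ ?_
      rw [← Matrix.mulVec_mulVec, span_block ε hT hB, hev]
      rintro (_ | ⟨l, a⟩) ho
      · simp only [Equiv.symm_apply_apply]
        rw [h0, eval_prod]
        exact Finset.prod_eq_zero (Finset.mem_univ j) ht
      · simp only [Equiv.symm_apply_apply]
        by_cases hl : j = l
        · subst hl
          exact absurd rfl (ho a)
        · exact eval_eq_zero_of_dvd_of_eval_eq_zero (hdvd j l a hl) ht

end Geom

section Main

open Polynomial

theorem main_thm
    (r : ℕ) (nv : Fin r → ℕ) (n : ℕ) (hn1 : 1 ≤ n) (hn : n = ∑ j, nv j) (s : ℕ) (j0 : Fin r)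
    (h0 : s ≤ nv j0 + 3 ∨ nv j0 = 1) (h1 : ∀ j, j ≠ j0 → s ≤ nv j + 2) :
    GenHoldsPtsSpaces n s r nv fun P B =>
      ∃ C : Set (PP n), IsRNC n C ∧ (∀ i, projSet (P i) ⊆ C) ∧
        ∀ j, (C ∩ projSet (B j)).ncard = nv j := by
  have hcard : Fintype.card (Option ((j : Fin r) × Fin (nv j))) = n + 1 := by simp [hn]
  obtain ⟨ε⟩ : Nonempty (Option ((j : Fin r) × Fin (nv j)) ≃ Fin (n + 1)) :=
    ⟨Fintype.equivFinOfCardEq hcard⟩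
  obtain ⟨τ, hτ⟩ : ∃ τ : ℕ → ℂ, τ = fun i : ℕ => (i : ℂ) := ⟨_, rfl⟩
  obtain ⟨ρ, hρ⟩ : ∃ ρ : ((j : Fin r) × Fin (nv j)) → ℂ,
    ρ = fun z => -(((finSigmaFinEquiv z : ℕ) + 1 : ℕ) : ℂ) := ⟨_, rfl⟩
  have hτi : Function.Injective τ := by rw [hτ]; exact Nat.cast_injective
  have hρi : Function.Injective ρ := by
    intro a b h
    rw [hρ] at h
    have h := neg_injective h
    have := Nat.cast_injective h
    exact finSigmaFinEquiv.injective (Fin.ext (by omega))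
  have hτρ : ∀ i z, τ i ≠ ρ z := by
    intro i z h
    rw [hτ, hρ] at h
    have : ((i + ((finSigmaFinEquiv z : ℕ) + 1) : ℕ) : ℂ) = 0 := by
      push_cast
      push_cast at h
      rw [h]; ring
    have := Nat.cast_eq_zero.1 this
    omega
  obtain ⟨yex, hyex⟩ : ∃ yex : ℕ → Option ((j : Fin r) × Fin (nv j)) → ℂ,
    yex = fun i o => o.elim 1 (fun z => 1 / (τ i - ρ z)) := ⟨_, rfl⟩
  obtain ⟨x0, hx0⟩ : ∃ x0 : ((Fin s × Fin (n + 1) × Fin 1) ⊕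
      ((j : Fin r) × (Fin (n + 1) × Fin (nv j)))) → ℂ,
    x0 = Sum.elim (fun q => yex q.1 (ε.symm q.2.1))
      (fun q => if q.2.1 = ε (some ⟨q.1, q.2.2⟩) then 1 else 0) := ⟨_, rfl⟩
  obtain ⟨T, hT⟩ : ∃ T : (((Fin s × Fin (n + 1) × Fin 1) ⊕
      ((j : Fin r) × (Fin (n + 1) × Fin (nv j)))) → ℂ) → Matrix (Fin (n + 1)) (Fin (n + 1)) ℂ,
    T = fun x k l => (ε.symm l).elim (if k = l then 1 else 0)
      (fun z => x (Sum.inr ⟨z.1, (k, z.2)⟩)) := ⟨_, rfl⟩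
  have hT0 : T x0 = 1 := by
    ext k l
    obtain ⟨o, rfl⟩ := ε.surjective l
    rw [hT, hx0, Matrix.one_apply]
    rcases o with _ | ⟨j, a⟩ <;> simp
  have hTr : ∀ k l, Reg x0 (fun x => T x k l) := by
    intro k l
    obtain ⟨o, rfl⟩ := ε.surjective l
    rw [hT]
    rcases o with _ | ⟨j, a⟩
    · simpa using Reg.const _
    · simpa using Reg.coord _
  have hTdet : (T x0).det ≠ 0 := by simp [hT0]
  obtain ⟨pt, hpt⟩ : ∃ pt : ℕ → (((Fin s × Fin (n + 1) × Fin 1) ⊕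
      ((j : Fin r) × (Fin (n + 1) × Fin (nv j)))) → ℂ) → Fin (n + 1) → ℂ,
    pt = fun i x k => if h : i < s then x (Sum.inl (⟨i, h⟩, k, 0)) else yex i (ε.symm k) :=
    ⟨_, rfl⟩
  have hptr : ∀ i k, Reg x0 (fun x => pt i x k) := by
    intro i k
    rw [hpt]
    by_cases h : i < s
    · simpa [h] using Reg.coord _
    · simpa [h] using Reg.const _
  have hpt0 : ∀ i, pt i x0 = fun k => yex i (ε.symm k) := by
    intro i
    ext k
    rw [hpt, hx0]
    by_cases h : i < s <;> simp [h]
  obtain ⟨y, hy⟩ : ∃ y : ℕ → (((Fin s × Fin (n + 1) × Fin 1) ⊕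
      ((j : Fin r) × (Fin (n + 1) × Fin (nv j)))) → ℂ) → Fin (n + 1) → ℂ,
    y = fun i x => (T x)⁻¹.mulVec (pt i x) := ⟨_, rfl⟩
  have hyr : ∀ i k, Reg x0 (fun x => y i x k) := by
    intro i k
    rw [hy]
    exact Reg.mulVec (A := fun x => (T x)⁻¹) (v := fun x => pt i x)
      (Reg.matInv hTr hTdet) (hptr i) k
  have hy0 : ∀ i o, y i x0 (ε o) = yex i o := by
    intro i o
    rw [hy]
    simp [hT0, hpt0]
  have hyn : ∀ i, y i x0 (ε none) = 1 := fun i => by rw [hy0, hyex]; rfl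
  obtain ⟨q, hq⟩ : ∃ q : (j : Fin r) → ℕ → (((Fin s × Fin (n + 1) × Fin 1) ⊕
      ((j : Fin r) × (Fin (n + 1) × Fin (nv j)))) → ℂ) → Fin (nv j) → ℂ,
    q = fun j i x a => y i x (ε (some ⟨j, a⟩)) / y i x (ε none) := ⟨_, rfl⟩
  have hqr : ∀ j i a, Reg x0 (fun x => q j i x a) := by
    intro j i a
    rw [hq]
    exact (hyr _ _).div (hyr _ _) (by rw [hyn]; exact one_ne_zero)
  have hq0 : ∀ j i a, q j i x0 a = 1 / (τ i - ρ ⟨j, a⟩) := by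
    intro j i a
    rw [hq]
    beta_reduce
    rw [hyn, hy0, hyex, div_one]
    rfl
  have hρj : ∀ j, Function.Injective (fun a => ρ ⟨j, a⟩) := fun j a b h => by
    simpa using hρi h
  obtain ⟨t, ht, ht0, hblk⟩ : ∃ t : ℕ → (((Fin s × Fin (n + 1) × Fin 1) ⊕
      ((j : Fin r) × (Fin (n + 1) × Fin (nv j)))) → ℂ) → ℂ,
      (∀ i, Reg x0 (t i)) ∧ (∀ i, t i x0 = τ i) ∧
      BlockSol x0 (fun a => ρ ⟨j0, a⟩) (fun i => i < s) t (q j0) := by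
    rcases h0 with h | h
    · exact block_two (hρj j0) hτi (fun i a => hτρ _ _) (hqr j0) (hq0 j0) h
    · exact block_three h (fun i a => hτρ _ _) (hqr j0) (hq0 j0) s
  have hall : ∀ j, BlockSol x0 (fun a => ρ ⟨j, a⟩) (fun i => i < s) t (q j) := by
    intro j
    by_cases h : j = j0
    · rw [h]; exact hblk
    · exact block_one (hρj j) hτi (fun i a => hτρ _ _) (hqr j) (hq0 j) ht ht0 (h1 j h)
  choose D N hDr hNr hD0 hN0 hDd hNd hev using hall
  obtain ⟨H, hH⟩ : ∃ H : Option ((j : Fin r) × Fin (nv j)) → (((Fin s × Fin (n + 1) × Fin 1) ⊕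
      ((j : Fin r) × (Fin (n + 1) × Fin (nv j)))) → ℂ) → ℂ[X],
    H = fun o x => o.elim (∏ j, D j x)
      (fun z => N z.1 z.2 x * ∏ i ∈ Finset.univ.erase z.1, D i x) := ⟨_, rfl⟩
  have hHn : ∀ x, H none x = ∏ j, D j x := fun x => by rw [hH]; rfl
  have hHs : ∀ j a x, H (some ⟨j, a⟩) x = N j a x * ∏ i ∈ Finset.univ.erase j, D i x :=
    fun j a x => by rw [hH]; rfl
  have hHr : ∀ o, RegP x0 (H o) := by
    rintro (_ | ⟨j, a⟩)
    · simp only [funext hHn]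
      exact RegP.prod _ fun j _ => hDr j
    · simp only [funext (hHs j a)]
      exact (hNr j a).mul (RegP.prod _ fun j _ => hDr j)
  have hHd : ∀ o x, (H o x).natDegree ≤ n := by
    rintro (_ | ⟨j, a⟩) x
    · rw [hHn, hn]
      exact (natDegree_prod_le _ _).trans (Finset.sum_le_sum fun j _ => hDd j x)
    · rw [hHs, hn, ← Finset.add_sum_erase _ _ (Finset.mem_univ j)]
      refine natDegree_mul_le.trans (add_le_add (hNd j a x) ?_)
      exact (natDegree_prod_le _ _).trans (Finset.sum_le_sum fun j _ => hDd j x)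
  have hHn0 : H none x0 = exD ρ := by
    rw [hHn, exD, Fintype.prod_sigma]
    exact Finset.prod_congr rfl fun j _ => hD0 j
  have hHs0 : ∀ j a, H (some ⟨j, a⟩) x0 = exN ρ ⟨j, a⟩ := by
    intro j a
    apply mul_right_cancel₀ (X_sub_C_ne_zero (ρ ⟨j, a⟩))
    rw [exN_mul, ← hHn0, hHs, hHn, hN0, ← Finset.mul_prod_erase _ _ (Finset.mem_univ j), hD0,
      ← exN_mul a]
    ring
  have hdet0 : (Matrix.of fun (k e : Fin (n + 1)) => (H (ε.symm k) x0).coeff e).det ≠ 0 := by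
    intro h
    obtain ⟨v, hv, hv0⟩ := Matrix.exists_vecMul_eq_zero_iff.2 h
    have key : C (v (ε none)) * exD ρ + ∑ z, C (v (ε (some z))) * exN ρ z = 0 := by
      have e1 : C (v (ε none)) * exD ρ + ∑ z, C (v (ε (some z))) * exN ρ z =
          ∑ o, C (v (ε o)) * H o x0 := by
        rw [Fintype.sum_option, hHn0]
        simp only [← hHs0]
      have hdeg : (∑ o, C (v (ε o)) * H o x0).natDegree ≤ n :=
        natDegree_sum_le_of_forall_le _ _ fun o _ => (natDegree_C_mul_le _ _).trans (hHd o x0)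
      rw [e1]
      ext e
      by_cases he : e < n + 1
      · have := congrFun hv0 ⟨e, he⟩
        simp only [Matrix.vecMul, dotProduct, Matrix.of_apply, Pi.zero_apply] at this
        rw [finsetSum_coeff, coeff_zero, ← this, ← ε.sum_comp]
        simp
      · rw [coeff_eq_zero_of_natDegree_lt (by omega), coeff_zero]
    obtain ⟨g1, g2⟩ := ex_indep hρi _ (fun z => v (ε (some z))) key
    apply hv
    ext k
    obtain ⟨o, rfl⟩ := ε.surjective k
    rcases o with _ | z
    · exact g1
    · exact g2 z
  have hZ : Fintype.card ((j : Fin r) × Fin (nv j)) = n := by simp [hn]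
  have hlc0 : (H none x0).coeff n ≠ 0 := by
    rw [hHn0]
    have := exD_monic (ρ := ρ)
    rw [Monic, leadingCoeff, exD_natDegree, hZ] at this
    rw [this]
    exact one_ne_zero
  have E1 := (Reg.det hTr).ne hTdet
  have E2 : ∀ᶠ x in ZN x0, ∀ i : Fin s, y i x (ε none) ≠ 0 := by
    rw [Filter.eventually_all]
    exact fun i => (hyr _ _).ne (by rw [hyn]; exact one_ne_zero)
  have E3 := (Reg.det (A := fun x => Matrix.of fun (k e : Fin (n + 1)) =>
    (H (ε.symm k) x).coeff e) (fun k e => hHr _ _)).ne hdet0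
  have E4 := (hHr none n).ne hlc0
  have E5 := (hHr none).separable hn1 (hHd none) (by rw [hHn0, exD_natDegree, hZ])
    (by rw [hHn0]; exact exD_separable hρi)
  have E6 : ∀ᶠ x in ZN x0, ∀ i : Fin s, (H none x).eval (t i x) ≠ 0 := by
    rw [Filter.eventually_all]
    intro i
    refine ((hHr none).eval (hHd none) (ht i)).ne ?_
    rw [hHn0, ht0]
    exact exD_eval_ne (hτρ i)
  have E7 := Filter.eventually_all.2 hev
  obtain ⟨F, hF0, hF⟩ := ZN_iff.1
    (E1.and (E2.and (E3.and (E4.and (E5.and (E6.and E7))))))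
  refine ⟨F, fun h => hF0 (by rw [h, map_zero]), fun P B _ _ hne => ?_⟩
  obtain ⟨E1, E2, E3, E4, E5, E6, E7⟩ := hF _ hne
  obtain ⟨x, hx⟩ : ∃ x : ((Fin s × Fin (n + 1) × Fin 1) ⊕
      ((j : Fin r) × (Fin (n + 1) × Fin (nv j)))) → ℂ,
    x = (Sum.elim (fun q => P q.1 q.2.1 q.2.2) (fun q => B q.1 q.2.1 q.2.2)) := ⟨_, rfl⟩
  rw [← hx] at E1 E2 E3 E4 E5 E6 E7
  refine geom hn1 hn ε E1 ?_ P (fun j => D j x) (fun o => H o x) (fun j => hDd j x)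
    (fun o => hHd o x) (hHn x) ?_ E3 E5 E4 ?_
  · intro j a k
    rw [hT, hx]
    simp
  · intro i j a hij
    beta_reduce
    rw [hHs]
    exact Dvd.dvd.mul_left (Finset.dvd_prod_of_mem (fun i => D i x) (by simp [hij])) _
  · intro i
    refine ⟨y i x (ε none) / (H none x).eval (t i x), t i x, ?_⟩
    have e1 : (fun k => P i k 0) = (T x).mulVec (y i x) := by
      rw [hy]
      beta_reduce
      rw [Matrix.mulVec_mulVec, Matrix.mul_nonsing_inv _ (isUnit_iff_ne_zero.2 E1),
        Matrix.one_mulVec, hpt, hx]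
      ext k
      simp
    rw [e1]
    congr 1
    ext k
    obtain ⟨o, rfl⟩ := ε.surjective k
    have hne1 := E6 i
    have hne2 := E2 i
    rcases o with _ | ⟨j, a⟩
    · simp only [Pi.smul_apply, Equiv.symm_apply_apply, smul_eq_mul]
      field_simp
    · simp only [Pi.smul_apply, Equiv.symm_apply_apply, smul_eq_mul]
      have e2 := E7 j i i.2 a
      have e3 : (H (some ⟨j, a⟩) x).eval (t i x) = q j i x a * (H none x).eval (t i x) := by
        rw [hHs, hHn, ← Finset.mul_prod_erase _ _ (Finset.mem_univ j), eval_mul, eval_mul, e2]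
        ring
      have e4 : q j i x a = y i x (ε (some ⟨j, a⟩)) / y i x (ε none) := by rw [hq]
      rw [e3, e4]
      field_simp

end Main

/-- Theorem (SEGREteo): under the numerical hypotheses, for a generic configuration of
`s` points and `r` linear subspaces `Λ₁,…,Λ_r` of dimensions `n₁-1,…,n_r-1` in `ℙⁿ`,
`n = n₁+⋯+n_r`, there exists a rational normal curve through the points meeting each
`Λⱼ` in exactly `nⱼ` distinct points. -/
theorem segre_feasibility
    (r : ℕ) (hr : 2 ≤ r) (nv : Fin r → ℕ) (hnv : ∀ j, 1 ≤ nv j) (hmono : Monotone nv)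
    (n : ℕ) (hn : n = ∑ j, nv j) (s : ℕ)
    (hcond :
      (s ≤ nv ⟨0, by omega⟩ + 3 ∧ 1 < nv ⟨0, by omega⟩ ∧ nv ⟨0, by omega⟩ < nv ⟨1, by omega⟩) ∨
      (s ≤ nv ⟨1, by omega⟩ + 2 ∧ (nv ⟨0, by omega⟩ = 1 ∨ nv ⟨0, by omega⟩ = nv ⟨1, by omega⟩))) :
    GenHoldsPtsSpaces n s r nv fun P B =>
      ∃ C : Set (PP n), IsRNC n C ∧ (∀ i, projSet (P i) ⊆ C) ∧
        ∀ j, (C ∩ projSet (B j)).ncard = nv j := by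
  have hn1 : 1 ≤ n := by
    rw [hn]
    exact (hnv ⟨0, by omega⟩).trans
      (Finset.single_le_sum (f := nv) (fun _ _ => Nat.zero_le _) (Finset.mem_univ _))
  have hge : ∀ j : Fin r, j ≠ ⟨0, by omega⟩ → nv ⟨1, by omega⟩ ≤ nv j := by
    intro j hj
    apply hmono
    rw [Fin.le_def]
    have : (j : ℕ) ≠ 0 := fun h => hj (Fin.ext h)
    simp only
    omega
  refine main_thm r nv n hn1 hn s ⟨0, by omega⟩ ?_ ?_
  · omega
  · intro j hj
    have := hge j hj
    omega

end
end

section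
/- Let n ≥ 3 and let L = (l₀,…,l_{n−2}) be a weight vector in ℙⁿ. If Σ_{i=0}^{n−2} (i+1)(n−1−i)·lᵢ > (n+3)(n−1), then L is non-feasible: for a generic configuration of linear subspaces of weight L, no rational normal curve maximally intersects it. -/
noncomputable section

/-- A configuration of weight `L = (l₀,…,l_{n-2})`: for each `i`, `lᵢ` matrices of size
`(n+1) × (i+1)`, whose column spans give the `i`-dimensional components. -/
abbrev Config (n : ℕ) (L : Fin (n - 1) → ℕ) :=
  (i : Fin (n - 1)) → Fin (L i) → Matrix (Fin (n + 1)) (Fin (i.1 + 1)) ℂ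

/-- All matrices of the configuration have full rank. -/
def FullRank {n : ℕ} {L : Fin (n - 1) → ℕ} (A : Config n L) : Prop :=
  ∀ i j, (A i j).rank = i.1 + 1

/-- A curve `C` maximally intersects the configuration `A`: it meets every `i`-dimensional
component in exactly `i+1` distinct points. -/
def MaxIntersects {n : ℕ} {L : Fin (n - 1) → ℕ} (C : Set (PP n)) (A : Config n L) : Prop :=
  ∀ i j, (C ∩ projSet (A i j)).ncard = i.1 + 1

/-- A property `Q` holds for a generic configuration of weight `L`: there is a nonzero
polynomial in the matrix entries such that `Q` holds at every full-rank tuple of matrices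
where the polynomial does not vanish. -/
def GenHolds (n : ℕ) (L : Fin (n - 1) → ℕ) (Q : Config n L → Prop) : Prop :=
  ∃ F : MvPolynomial ((i : Fin (n - 1)) × (Fin (L i) × Fin (n + 1) × Fin (i.1 + 1))) ℂ,
    F ≠ 0 ∧ ∀ A : Config n L, FullRank A →
      MvPolynomial.eval (fun p => A p.1 p.2.1 p.2.2.1 p.2.2.2) F ≠ 0 → Q A

/-- `L` is feasible: a generic configuration of weight `L` is maximally intersected
by some rational normal curve. -/
def Feasible (n : ℕ) (L : Fin (n - 1) → ℕ) : Prop :=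
  GenHolds n L fun A => ∃ C : Set (PP n), IsRNC n C ∧ MaxIntersects C A

/-- `L` is non-feasible: for a generic configuration of weight `L`, no rational normal
curve maximally intersects it. -/
def NonFeasible (n : ℕ) (L : Fin (n - 1) → ℕ) : Prop :=
  GenHolds n L fun A => ¬ ∃ C : Set (PP n), IsRNC n C ∧ MaxIntersects C A


lemma dep_lemma {τ β : Type} [Fintype τ] [Fintype β] (G : β → MvPolynomial τ ℂ)
    (h : Fintype.card τ < Fintype.card β) :
    ∃ F : MvPolynomial β ℂ, F ≠ 0 ∧ MvPolynomial.aeval G F = 0 := by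
  by_contra hc
  push Not at hc
  have hi : AlgebraicIndependent ℂ G := by
    rw [algebraicIndependent_iff]
    intro p hp
    by_contra h0
    exact hc p h0 hp
  have h1 := hi.cardinalMk_le_trdeg
  rw [MvPolynomial.trdeg_of_isDomain] at h1
  simp at h1
  omega

open Classical in
lemma dep_pattern {τ β : Type} [Fintype τ] [Fintype β] (G : β → MvPolynomial τ ℂ) :
    ∃ F : MvPolynomial β ℂ, F ≠ 0 ∧ ∀ x : τ → ℂ,
      (Finset.univ.filter fun a => ¬ (x a = 0 ∨ x a = 1)).card < Fintype.card β →
      MvPolynomial.eval (fun b => MvPolynomial.eval x (G b)) F = 0 := by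
  have key : ∀ ρ : τ → Option Bool, ∃ F : MvPolynomial β ℂ, F ≠ 0 ∧
      (Fintype.card {a // ρ a = none} < Fintype.card β → ∀ x : τ → ℂ,
        (∀ a, ρ a = some true → x a = 1) → (∀ a, ρ a = some false → x a = 0) →
        MvPolynomial.eval (fun b => MvPolynomial.eval x (G b)) F = 0) := by
    intro ρ
    by_cases hc : Fintype.card {a // ρ a = none} < Fintype.card β
    · let φ : τ → MvPolynomial {a // ρ a = none} ℂ := fun a =>
        if h : ρ a = none then MvPolynomial.X ⟨a, h⟩ else
          if ρ a = some true then 1 else 0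
      obtain ⟨F, hF, h0⟩ := dep_lemma (fun b => MvPolynomial.aeval φ (G b)) hc
      refine ⟨F, hF, fun _ x h1 h2 => ?_⟩
      have hx : ∀ a, MvPolynomial.aeval (fun s : {a // ρ a = none} => x s.1) (φ a) = x a := by
        intro a
        rcases h : ρ a with _ | _ | _
        · simp [φ, h]
        · simp [φ, h, h2 a h]
        · simp [φ, h, h1 a h]
      have h3 := congrArg (MvPolynomial.aeval (fun s : {a // ρ a = none} => x s.1)) h0
      rw [map_zero, MvPolynomial.comp_aeval_apply] at h3
      simp only [MvPolynomial.comp_aeval_apply, hx] at h3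
      simpa [MvPolynomial.aeval_eq_eval] using h3
    · exact ⟨1, one_ne_zero, fun h => absurd h hc⟩
  choose F hF h0 using key
  refine ⟨∏ ρ, F ρ, Finset.prod_ne_zero_iff.2 fun ρ _ => hF ρ, fun x hx => ?_⟩
  rw [map_prod]
  let ρ : τ → Option Bool := fun a =>
    if x a = 0 then some false else if x a = 1 then some true else none
  refine Finset.prod_eq_zero (Finset.mem_univ ρ) (h0 ρ ?_ x ?_ ?_)
  · rw [Fintype.card_subtype]
    convert hx using 4
    simp only [ρ]
    split_ifs <;> simp_all
  · intro a
    simp only [ρ]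
    split_ifs <;> simp_all
  · intro a
    simp only [ρ]
    split_ifs <;> simp_all

lemma homog_veron {n : ℕ} (p : MvPolynomial (Fin 2) ℂ) (hp : p.IsHomogeneous n) :
    ∃ c : Fin (n + 1) → ℂ, ∀ v, MvPolynomial.eval v p = ∑ k, c k * veron n v k := by
  have key : (fun v => MvPolynomial.eval v p) ∈
      Submodule.span ℂ (Set.range fun (k : Fin (n + 1)) (v : Fin 2 → ℂ) => veron n v k) := by
    have : (fun v => MvPolynomial.eval v p) =
        ∑ d ∈ p.support, (p.coeff d) • fun (v : Fin 2 → ℂ) => v 0 ^ d 0 * v 1 ^ d 1 := by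
      funext v
      rw [MvPolynomial.eval_eq']
      simp [Fin.prod_univ_two]
    rw [this]
    refine Submodule.sum_mem _ fun d hd => Submodule.smul_mem _ _ (Submodule.subset_span ?_)
    have hd' : d 0 + d 1 = n := by
      have := hp (MvPolynomial.mem_support_iff.1 hd)
      simpa [Finsupp.weight_apply, Finsupp.sum_fintype, Fin.sum_univ_two] using this
    refine ⟨⟨d 0, by omega⟩, ?_⟩
    funext v
    simp only [veron]
    congr 2
    omega
  obtain ⟨c, hc⟩ := (Submodule.mem_span_range_iff_exists_fun ℂ).1 key
  refine ⟨c, fun v => ?_⟩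
  rw [← congrFun hc v]
  simp

lemma lin_homog (a b : ℂ) : (MvPolynomial.C a * MvPolynomial.X 0 + MvPolynomial.C b * MvPolynomial.X 1 :
    MvPolynomial (Fin 2) ℂ).IsHomogeneous 1 :=
  (MvPolynomial.isHomogeneous_C_mul_X _ _).add (MvPolynomial.isHomogeneous_C_mul_X _ _)

lemma veron_comp (n : ℕ) (g : Matrix (Fin 2) (Fin 2) ℂ) :
    ∃ S : Matrix (Fin (n + 1)) (Fin (n + 1)) ℂ, ∀ v, veron n (g.mulVec v) = S.mulVec (veron n v) := by
  have key : ∀ k : Fin (n + 1), ∃ c : Fin (n + 1) → ℂ, ∀ v,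
      veron n (g.mulVec v) k = ∑ j, c j * veron n v j := by
    intro k
    have h := (((lin_homog (g 0 0) (g 0 1)).pow (k : ℕ)).mul ((lin_homog (g 1 0) (g 1 1)).pow (n - k)))
    have hk : 1 * (k : ℕ) + 1 * (n - k) = n := by omega
    rw [hk] at h
    obtain ⟨c, hc⟩ := homog_veron _ h
    refine ⟨c, fun v => ?_⟩
    rw [← hc v]
    simp [veron, Matrix.mulVec, dotProduct, Fin.sum_univ_two]
  choose c hc using key
  exact ⟨fun k j => c k j, fun v => by funext k; rw [hc]; simp [Matrix.mulVec, dotProduct]⟩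

lemma veron_ne_zero (n : ℕ) {v : Fin 2 → ℂ} (hv : v ≠ 0) : veron n v ≠ 0 := by
  intro h
  by_cases h0 : v 0 = 0
  · have h1 : v 1 = 0 := by
      have := congrFun h 0
      simp [veron] at this
      exact this.1
    apply hv; funext i; fin_cases i <;> simp [h0, h1]
  · have := congrFun h (Fin.last n)
    simp [veron] at this
    exact h0 this.1

lemma veron_smul (n : ℕ) (c : ℂ) (v : Fin 2 → ℂ) : veron n (c • v) = c ^ n • veron n v := by
  funext k
  have hk : (k : ℕ) + (n - k) = n := by omega
  have hc : c ^ n = c ^ (k : ℕ) * c ^ (n - (k : ℕ)) := by rw [← pow_add, hk]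
  simp only [veron, Pi.smul_apply, smul_eq_mul]
  rw [mul_pow, mul_pow, hc]
  ring

def dt (v w : Fin 2 → ℂ) : ℂ := v 0 * w 1 - v 1 * w 0

lemma dt_zero {v w : Fin 2 → ℂ} (hv : v ≠ 0) (h : dt v w = 0) : ∃ c : ℂ, w = c • v := by
  unfold dt at h
  by_cases h0 : v 0 = 0
  · have h1 : v 1 ≠ 0 := by
      intro h1
      apply hv; funext i; fin_cases i <;> simp [h0, h1]
    have hw : w 0 = 0 := by
      simp [h0] at h
      tauto
    refine ⟨w 1 / v 1, ?_⟩
    funext i; fin_cases i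
    · simp [h0, hw]
    · simp; field_simp
  · refine ⟨w 0 / v 0, ?_⟩
    funext i; fin_cases i
    · simp; field_simp
    · simp; field_simp; linear_combination h

lemma veron_indep {n m : ℕ} (hm : m ≤ n) (v : Fin (m + 1) → Fin 2 → ℂ) (h0 : ∀ k, v k ≠ 0)
    (hd : ∀ j k, j ≠ k → dt (v j) (v k) ≠ 0) :
    LinearIndependent ℂ (fun k => veron n (v k)) := by
  rw [Fintype.linearIndependent_iff]
  intro a ha k
  obtain ⟨c, hc⟩ : ∃ c, v k c ≠ 0 := Function.ne_iff.1 (h0 k)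
  have h := (MvPolynomial.IsHomogeneous.prod (Finset.univ.erase k) _ (fun _ => 1)
    fun j _ => lin_homog (-(v j 1)) (v j 0)).mul ((MvPolynomial.isHomogeneous_X_pow (R := ℂ) c (n - m)))
  have hk : (∑ i ∈ Finset.univ.erase k, 1) + (n - m) = n := by simp; omega
  rw [hk] at h
  obtain ⟨e, he⟩ := homog_veron _ h
  have h1 : ∑ j, a j * ∑ i, e i * veron n (v j) i = 0 := by
    simp only [Finset.mul_sum]
    rw [Finset.sum_comm]
    refine Finset.sum_eq_zero fun i _ => ?_
    have := congrFun ha i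
    simp at this
    calc _ = e i * ∑ j, a j * veron n (v j) i := by
          rw [Finset.mul_sum]; exact Finset.sum_congr rfl fun _ _ => by ring
      _ = 0 := by rw [this, mul_zero]
  simp only [← he] at h1
  rw [Finset.sum_eq_single k] at h1
  · rcases mul_eq_zero.1 h1 with h1 | h1
    · exact h1
    · exfalso
      simp [Finset.prod_eq_zero_iff] at h1
      rcases h1 with ⟨j, hj, h1⟩ | h1
      · apply hd j k hj
        unfold dt; linear_combination h1
      · exact hc h1.1
  · intro j _ hj
    rw [map_mul, map_prod, Finset.prod_eq_zero (i := j)]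
    · simp
    · simp [hj]
    · simp; ring
  · simp

def Good (w : Fin 2 → ℂ) : Prop := ∃ d : ℂ, d ≠ 0 ∧ ∀ c, (d • w) c = 0 ∨ (d • w) c = 1

lemma norm2 (p q c : Fin 2 → ℂ) (h : dt p q ≠ 0) :
    ∃ g : Matrix (Fin 2) (Fin 2) ℂ, (∀ v, v ≠ 0 → g.mulVec v ≠ 0) ∧
      Good (g.mulVec p) ∧ Good (g.mulVec q) ∧ Good (g.mulVec c) := by
  obtain ⟨α, hα, hα'⟩ : ∃ α : ℂ, α ≠ 0 ∧ (α * dt c q = 0 ∨ α * dt c q = 1) := by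
    by_cases h : dt c q = 0
    · exact ⟨1, one_ne_zero, by simp [h]⟩
    · exact ⟨(dt c q)⁻¹, inv_ne_zero h, by simp [h]⟩
  obtain ⟨β, hβ, hβ'⟩ : ∃ β : ℂ, β ≠ 0 ∧ (β * dt p c = 0 ∨ β * dt p c = 1) := by
    by_cases h : dt p c = 0
    · exact ⟨1, one_ne_zero, by simp [h]⟩
    · exact ⟨(dt p c)⁻¹, inv_ne_zero h, by simp [h]⟩
  have hg : ∀ v, (!![α * q 1, -α * q 0; -β * p 1, β * p 0]).mulVec v =
      ![α * dt v q, β * dt p v] := by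
    intro v; funext i; fin_cases i <;> simp [Matrix.mulVec, dotProduct, Fin.sum_univ_two, dt] <;> ring
  refine ⟨!![α * q 1, -α * q 0; -β * p 1, β * p 0], ?_, ?_, ?_, ?_⟩
  · intro v hv h0
    rw [hg] at h0
    have e0 := congrFun h0 0
    have e1 := congrFun h0 1
    simp [hα, hβ] at e0 e1
    unfold dt at *
    apply hv
    funext i
    fin_cases i
    · have : v 0 * (p 0 * q 1 - p 1 * q 0) = 0 := by linear_combination p 0 * e0 + q 0 * e1
      simpa [h] using this
    · have : v 1 * (p 0 * q 1 - p 1 * q 0) = 0 := by linear_combination p 1 * e0 + q 1 * e1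
      simpa [h] using this
  · rw [hg]
    refine ⟨(α * dt p q)⁻¹, inv_ne_zero (mul_ne_zero hα h), fun i => ?_⟩
    have : dt p p = 0 := by unfold dt; ring
    fin_cases i
    · right; simp; field_simp
    · left; simp [this]
  · rw [hg]
    refine ⟨(β * dt p q)⁻¹, inv_ne_zero (mul_ne_zero hβ h), fun i => ?_⟩
    have : dt q q = 0 := by unfold dt; ring
    fin_cases i
    · left; simp [this]
    · right; simp; field_simp
  · rw [hg]
    refine ⟨1, one_ne_zero, fun i => ?_⟩
    fin_cases i
    · simpa using hα'
    · simpa using hβ'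

lemma good_smul {w : Fin 2 → ℂ} (h : Good w) {c : ℂ} (hc : c ≠ 0) : Good (c • w) := by
  obtain ⟨d, hd, h⟩ := h
  refine ⟨d * c⁻¹, mul_ne_zero hd (inv_ne_zero hc), ?_⟩
  rwa [smul_smul, mul_assoc, inv_mul_cancel₀ hc, mul_one]

lemma norm3 (a b c : Fin 2 → ℂ) (ha : a ≠ 0) (hb : b ≠ 0) (hc : c ≠ 0) :
    ∃ g : Matrix (Fin 2) (Fin 2) ℂ, (∀ v, v ≠ 0 → g.mulVec v ≠ 0) ∧
      Good (g.mulVec a) ∧ Good (g.mulVec b) ∧ Good (g.mulVec c) := by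
  by_cases h : dt a b = 0
  · obtain ⟨x, rfl⟩ := dt_zero ha h
    have hx : x ≠ 0 := by rintro rfl; simp at hb
    by_cases h' : dt a c = 0
    · obtain ⟨y, rfl⟩ := dt_zero ha h'
      have hy : y ≠ 0 := by rintro rfl; simp at hc
      obtain ⟨q, hq⟩ : ∃ q, dt a q ≠ 0 := by
        by_contra hq
        push Not at hq
        apply ha
        have h1 := hq ![1, 0]
        have h2 := hq ![0, 1]
        simp [dt] at h1 h2
        funext i; fin_cases i <;> simp [h1, h2]
      obtain ⟨g, h1, h2, h3, h4⟩ := norm2 a q a hq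
      refine ⟨g, h1, h2, ?_, ?_⟩ <;> rw [Matrix.mulVec_smul]
      · exact good_smul h2 hx
      · exact good_smul h2 hy
    · obtain ⟨g, h1, h2, h3, h4⟩ := norm2 a c a h'
      refine ⟨g, h1, h2, ?_, h3⟩
      rw [Matrix.mulVec_smul]
      exact good_smul h2 hx
  · exact norm2 a b c h

/-- Every nonzero vector can be scaled to have one coordinate in `{0,1}`. -/
lemma one_coord {w : Fin 2 → ℂ} (hw : w ≠ 0) : ∃ d : ℂ, d ≠ 0 ∧
    (∃ c, (d • w) c = 0 ∨ (d • w) c = 1) ∧ (Good w → ∀ c, (d • w) c = 0 ∨ (d • w) c = 1) := by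
  by_cases h : Good w
  · obtain ⟨d, hd, h'⟩ := h
    exact ⟨d, hd, ⟨0, h' 0⟩, fun _ => h'⟩
  · obtain ⟨c, hc⟩ := Function.ne_iff.1 hw
    exact ⟨(w c)⁻¹, inv_ne_zero hc, ⟨c, Or.inr (by simpa using inv_mul_cancel₀ hc)⟩,
      fun h' => absurd h' h⟩

lemma extract {n m : ℕ} (hm : m ≤ n) (M : Matrix (Fin (n + 1)) (Fin (n + 1)) ℂ)
    (hM : IsUnit M.det) (A : Matrix (Fin (n + 1)) (Fin (m + 1)) ℂ) (hA : A.rank = m + 1)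
    (hI : ({P : PP n | ∃ v : Fin 2 → ℂ, v ≠ 0 ∧ ∃ c : ℂ, c ≠ 0 ∧
      P.rep = c • M.mulVec (veron n v)} ∩ projSet A).ncard = m + 1) :
    ∃ (v : Fin (m + 1) → Fin 2 → ℂ) (B : Fin (m + 1) → Fin (m + 1) → ℂ), (∀ k, v k ≠ 0) ∧
      ∀ r c, A r c = ∑ k, B k c * (M.mulVec (veron n (v k))) r := by
  set T := ({P : PP n | ∃ v : Fin 2 → ℂ, v ≠ 0 ∧ ∃ c : ℂ, c ≠ 0 ∧
      P.rep = c • M.mulVec (veron n v)} ∩ projSet A) with hT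
  have hfin : T.Finite := Set.finite_of_ncard_pos (by omega)
  have : Finite T := hfin
  have hc : Nat.card T = m + 1 := hI
  let e := (Finite.equivFinOfCardEq hc).symm
  have hP : ∀ k, ∃ v : Fin 2 → ℂ, v ≠ 0 ∧ ∃ c : ℂ, c ≠ 0 ∧
      (e k).1.rep = c • M.mulVec (veron n v) := fun k => (e k).2.1
  have hP2 : ∀ k, (e k).1.rep ∈ Submodule.span ℂ (Set.range fun j => fun r => A r j) :=
    fun k => (e k).2.2
  choose v hv c hc0 hrep using hP
  have hinj : Function.Injective M.mulVec :=
    Matrix.mulVec_injective_iff_isUnit.2 ((Matrix.isUnit_iff_isUnit_det _).2 hM)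
  have hd : ∀ j k, j ≠ k → dt (v j) (v k) ≠ 0 := by
    intro j k hjk h0
    obtain ⟨x, hx⟩ := dt_zero (hv j) h0
    apply hjk
    apply e.injective
    apply Subtype.ext
    rw [← Projectivization.mk_rep (e j).1, ← Projectivization.mk_rep (e k).1,
      Projectivization.mk_eq_mk_iff']
    have hx0 : x ≠ 0 := by
      rintro rfl
      exact hv k (by simpa using hx)
    refine ⟨c j * (c k)⁻¹ * (x ^ n)⁻¹, ?_⟩
    rw [hrep j, hrep k, hx, veron_smul, Matrix.mulVec_smul, smul_smul, smul_smul]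
    congr 1
    have := hc0 k
    field_simp
  have hli : LinearIndependent ℂ (fun k => M.mulVec (veron n (v k))) :=
    (veron_indep hm v hv hd).map' M.mulVecLin (LinearMap.ker_eq_bot.2 hinj)
  have hmem : ∀ k, M.mulVec (veron n (v k)) ∈
      Submodule.span ℂ (Set.range fun j => fun r => A r j) := by
    intro k
    have := Submodule.smul_mem _ (c k)⁻¹ (hP2 k)
    rwa [hrep, smul_smul, inv_mul_cancel₀ (hc0 k), one_smul] at this
  have hspan : Submodule.span ℂ (Set.range fun k => M.mulVec (veron n (v k))) =
      Submodule.span ℂ (Set.range fun j => fun r => A r j) := by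
    apply Submodule.eq_of_le_of_finrank_eq
    · rw [Submodule.span_le]
      rintro _ ⟨k, rfl⟩
      exact hmem k
    · rw [finrank_span_eq_card hli]
      rw [Matrix.rank_eq_finrank_span_cols] at hA
      simp only [Fintype.card_fin]
      exact hA.symm
  have hB : ∀ j, ∃ b : Fin (m + 1) → ℂ, ∑ k, b k • M.mulVec (veron n (v k)) = fun r => A r j := by
    intro j
    rw [← Submodule.mem_span_range_iff_exists_fun, hspan]
    exact Submodule.subset_span ⟨j, rfl⟩
  choose b hb using hB
  refine ⟨v, fun k j => b j k, hv, fun r j => ?_⟩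
  have := congrFun (hb j) r
  simp at this
  exact this.symm

abbrev KK (n : ℕ) (L : Fin (n - 1) → ℕ) := (i : Fin (n - 1)) × (Fin (L i) × Fin (i.1 + 1))

abbrev TT (n : ℕ) (L : Fin (n - 1) → ℕ) :=
  (Fin (n + 1) × Fin (n + 1)) ⊕ ((KK n L × Fin 2) ⊕
    ((i : Fin (n - 1)) × (Fin (L i) × Fin (i.1 + 1) × Fin (i.1 + 1))))

open MvPolynomial in
def GG (n : ℕ) (L : Fin (n - 1) → ℕ)
    (p : (i : Fin (n - 1)) × (Fin (L i) × Fin (n + 1) × Fin (i.1 + 1))) :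
    MvPolynomial (TT n L) ℂ :=
  ∑ m : Fin (p.1.1 + 1), X (Sum.inr (Sum.inr ⟨p.1, p.2.1, m, p.2.2.2⟩)) *
    ∑ q : Fin (n + 1), X (Sum.inl (p.2.2.1, q)) *
      (X (Sum.inr (Sum.inl (⟨p.1, p.2.1, m⟩, 0))) ^ (q : ℕ) *
       X (Sum.inr (Sum.inl (⟨p.1, p.2.1, m⟩, 1))) ^ (n - (q : ℕ)))

lemma eval_GG (n : ℕ) (L : Fin (n - 1) → ℕ) (M : Matrix (Fin (n + 1)) (Fin (n + 1)) ℂ)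
    (w : KK n L → Fin 2 → ℂ)
    (B : ((i : Fin (n - 1)) × (Fin (L i) × Fin (i.1 + 1) × Fin (i.1 + 1))) → ℂ)
    (p : (i : Fin (n - 1)) × (Fin (L i) × Fin (n + 1) × Fin (i.1 + 1))) :
    MvPolynomial.eval (Sum.elim (fun a => M a.1 a.2) (Sum.elim (fun a => w a.1 a.2) B)) (GG n L p)
      = ∑ m : Fin (p.1.1 + 1), B ⟨p.1, p.2.1, m, p.2.2.2⟩ *
        (M.mulVec (veron n (w ⟨p.1, p.2.1, m⟩))) p.2.2.1 := by
  simp [GG, Matrix.mulVec, dotProduct, veron]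

open Classical in
lemma count (n : ℕ) (hn : 3 ≤ n) (L : Fin (n - 1) → ℕ)
    (h : (n + 3) * (n - 1) < ∑ i : Fin (n - 1), (i.1 + 1) * (n - 1 - i.1) * L i)
    (M : Matrix (Fin (n + 1)) (Fin (n + 1)) ℂ) (w : KK n L → Fin 2 → ℂ)
    (B : ((i : Fin (n - 1)) × (Fin (L i) × Fin (i.1 + 1) × Fin (i.1 + 1))) → ℂ)
    (hM : ∃ r q, M r q = 1) (hw : ∀ k, ∃ c, w k c = 0 ∨ w k c = 1)
    (k₁ k₂ k₃ : KK n L) (h12 : k₁ ≠ k₂) (h13 : k₁ ≠ k₃) (h23 : k₂ ≠ k₃)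
    (h1 : ∀ c, w k₁ c = 0 ∨ w k₁ c = 1) (h2 : ∀ c, w k₂ c = 0 ∨ w k₂ c = 1)
    (h3 : ∀ c, w k₃ c = 0 ∨ w k₃ c = 1) (x : TT n L → ℂ)
    (hx : x = (Sum.elim (fun a => M a.1 a.2) (Sum.elim (fun a => w a.1 a.2) B))) :
    (Finset.univ.filter fun a => ¬ (x a = 0 ∨ x a = 1)).card <
      Fintype.card ((i : Fin (n - 1)) × (Fin (L i) × Fin (n + 1) × Fin (i.1 + 1))) := by
  rw [Finset.card_filter, Fintype.sum_sum_type, Fintype.sum_sum_type]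
  subst hx
  simp only [Sum.elim_inl, Sum.elim_inr]
  have e1 : (∑ a : Fin (n + 1) × Fin (n + 1), if ¬ (M a.1 a.2 = 0 ∨ M a.1 a.2 = 1) then 1 else 0)
      < (n + 1) * (n + 1) := by
    rw [← Finset.card_filter]
    obtain ⟨r, q, hrq⟩ := hM
    have : (Finset.univ.filter fun a : Fin (n + 1) × Fin (n + 1) =>
        ¬ (M a.1 a.2 = 0 ∨ M a.1 a.2 = 1)).card <
        (Finset.univ : Finset (Fin (n + 1) × Fin (n + 1))).card := by
      apply Finset.card_lt_card
      rw [Finset.ssubset_univ_iff]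
      intro he
      have := Finset.mem_univ (r, q)
      rw [← he] at this
      simp [hrq] at this
    simpa using this
  have e2 : (∑ a : KK n L × Fin 2, if ¬ (w a.1 a.2 = 0 ∨ w a.1 a.2 = 1) then 1 else 0) + 3
      ≤ ∑ i : Fin (n - 1), L i * (i.1 + 1) := by
    have hN : ∑ i : Fin (n - 1), L i * (i.1 + 1) = ∑ k : KK n L, 1 := by simp
    have hT : 3 = ∑ k : KK n L, if k ∈ ({k₁, k₂, k₃} : Finset (KK n L)) then 1 else 0 := by
      rw [← Finset.card_filter]
      simp only [Finset.filter_univ_mem]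
      rw [Finset.card_eq_three.2 ⟨k₁, k₂, k₃, h12, h13, h23, rfl⟩]
    rw [hN, hT, Fintype.sum_prod_type, ← Finset.sum_add_distrib]
    refine Finset.sum_le_sum fun k _ => ?_
    rw [Fin.sum_univ_two]
    by_cases hk : k ∈ ({k₁, k₂, k₃} : Finset (KK n L))
    · have : ∀ c, w k c = 0 ∨ w k c = 1 := by
        simp only [Finset.mem_insert, Finset.mem_singleton] at hk
        rcases hk with rfl | rfl | rfl <;> assumption
      simp [hk, this]
    · rw [if_neg hk]
      dsimp only
      rcases Fin.exists_fin_two.1 (hw k) with hc | hc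
      · rw [if_neg (not_not.2 hc)]
        split_ifs <;> simp
      · rw [if_neg (c := ¬ (w k 1 = 0 ∨ w k 1 = 1)) (not_not.2 hc)]
        split_ifs <;> simp
  have e3 : (∑ a : (i : Fin (n - 1)) × (Fin (L i) × Fin (i.1 + 1) × Fin (i.1 + 1)),
      if ¬ (B a = 0 ∨ B a = 1) then 1 else 0) ≤
      ∑ i : Fin (n - 1), L i * ((i.1 + 1) * (i.1 + 1)) := by
    rw [← Finset.card_filter]
    refine (Finset.card_le_univ _).trans (le_of_eq ?_)
    simp
  have e4 : Fintype.card ((i : Fin (n - 1)) × (Fin (L i) × Fin (n + 1) × Fin (i.1 + 1))) =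
      ∑ i : Fin (n - 1), L i * (i.1 + 1) + ∑ i : Fin (n - 1), L i * ((i.1 + 1) * (i.1 + 1)) +
      ∑ i : Fin (n - 1), (i.1 + 1) * (n - 1 - i.1) * L i := by
    simp only [Fintype.card_sigma, Fintype.card_prod, Fintype.card_fin]
    rw [← Finset.sum_add_distrib, ← Finset.sum_add_distrib]
    refine Finset.sum_congr rfl fun i _ => ?_
    obtain ⟨t, ht⟩ : ∃ t, n = i.1 + 1 + t := ⟨n - (i.1 + 1), by omega⟩
    have : n - 1 - i.1 = t := by omega
    rw [this]
    have h' : n + 1 = i.1 + 1 + t + 1 := by omega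
    rw [h']
    ring
  have e5 : (n + 3) * (n - 1) + 4 = (n + 1) * (n + 1) := by
    obtain ⟨t, rfl⟩ : ∃ t, n = t + 1 := ⟨n - 1, by omega⟩
    simp only [Nat.add_sub_cancel]
    ring
  have key := fun a b c (h1 : a < (n + 1) * (n + 1)) (h2 : b + 3 ≤ ∑ i : Fin (n - 1), L i * (i.1 + 1))
      (h3 : c ≤ ∑ i : Fin (n - 1), L i * ((i.1 + 1) * (i.1 + 1))) =>
    show a + (b + c) < Fintype.card
      ((i : Fin (n - 1)) × (Fin (L i) × Fin (n + 1) × Fin (i.1 + 1))) by omega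
  convert key _ _ _ e1 e2 e3 using 3 <;> congr

/-- If `Σ (i+1)(n-1-i)·lᵢ > (n+3)(n-1)` then `L` is non-feasible. -/
theorem nonfeasibility_numerical (n : ℕ) (hn : 3 ≤ n) (L : Fin (n - 1) → ℕ)
    (h : (n + 3) * (n - 1) < ∑ i : Fin (n - 1), (i.1 + 1) * (n - 1 - i.1) * L i) :
    NonFeasible n L := by
  classical
  obtain ⟨F, hF, hF0⟩ := dep_pattern (GG n L)
  refine ⟨F, hF, fun A hA hne hC => hne ?_⟩
  obtain ⟨C, ⟨M, hM, rfl⟩, hI⟩ := hC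
  have hex : ∀ (i : Fin (n - 1)) (j : Fin (L i)),
      ∃ (v : Fin (i.1 + 1) → Fin 2 → ℂ) (B : Fin (i.1 + 1) → Fin (i.1 + 1) → ℂ), (∀ k, v k ≠ 0) ∧
      ∀ r c, A i j r c = ∑ k, B k c * (M.mulVec (veron n (v k))) r := by
    intro i j
    have hi : i.1 ≤ n := by have := i.2; omega
    have h1 := hA i j
    have h2 := hI i j
    exact extract hi M hM (A i j) h1 h2
  choose v B hv hAB using hex
  have hcard : 2 < Fintype.card (KK n L) := by
    have hN : Fintype.card (KK n L) = ∑ i : Fin (n - 1), L i * (i.1 + 1) := by simp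
    have : ∑ i : Fin (n - 1), (i.1 + 1) * (n - 1 - i.1) * L i ≤
        (n - 1) * ∑ i : Fin (n - 1), L i * (i.1 + 1) := by
      rw [Finset.mul_sum]
      refine Finset.sum_le_sum fun i _ => ?_
      calc (i.1 + 1) * (n - 1 - i.1) * L i ≤ (i.1 + 1) * (n - 1) * L i :=
            Nat.mul_le_mul_right _ (Nat.mul_le_mul_left _ (Nat.sub_le _ _))
        _ = _ := by ring
    rw [hN]
    have h2 := h.trans_le this
    rw [mul_comm] at h2
    have := lt_of_mul_lt_mul_left h2 (Nat.zero_le _)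
    omega
  obtain ⟨k₁, k₂, k₃, h12, h13, h23⟩ := Fintype.two_lt_card_iff.1 hcard
  let V : KK n L → Fin 2 → ℂ := fun k => v k.1 k.2.1 k.2.2
  have hV : ∀ k, V k ≠ 0 := fun k => hv _ _ _
  obtain ⟨g, hg, g1, g2, g3⟩ := norm3 _ _ _ (hV k₁) (hV k₂) (hV k₃)
  have hgu : IsUnit g := by
    rw [← Matrix.mulVec_injective_iff_isUnit]
    intro a b hab
    by_contra hne
    refine hg (a - b) (sub_ne_zero.2 hne) ?_
    rw [Matrix.mulVec_sub, sub_eq_zero]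
    exact hab
  have hgd : IsUnit g.det := (Matrix.isUnit_iff_isUnit_det _).1 hgu
  obtain ⟨S, hS⟩ := veron_comp n g⁻¹
  have hMS : ∀ u, (M * S).mulVec (veron n (g.mulVec u)) = M.mulVec (veron n u) := by
    intro u
    rw [← Matrix.mulVec_mulVec, ← hS, Matrix.mulVec_mulVec, Matrix.nonsing_inv_mul _ hgd,
      Matrix.one_mulVec]
  have hMS0 : M * S ≠ 0 := by
    intro h0
    have h1 := hMS (V k₁)
    rw [h0, Matrix.zero_mulVec] at h1
    have hinj : Function.Injective M.mulVec :=
      Matrix.mulVec_injective_iff_isUnit.2 ((Matrix.isUnit_iff_isUnit_det _).2 hM)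
    exact veron_ne_zero n (hV k₁) (hinj (by rw [← h1, Matrix.mulVec_zero]))
  obtain ⟨r₀, q₀, he⟩ : ∃ r q, (M * S) r q ≠ 0 := by
    by_contra hc
    push Not at hc
    exact hMS0 (by ext r q; exact hc r q)
  set ε := (M * S) r₀ q₀ with hε
  choose d hd hd1 hd2 using fun k => one_coord (hg (V k) (hV k))
  let w : KK n L → Fin 2 → ℂ := fun k => d k • g.mulVec (V k)
  let M' : Matrix (Fin (n + 1)) (Fin (n + 1)) ℂ := ε⁻¹ • (M * S)
  let B' : ((i : Fin (n - 1)) × (Fin (L i) × Fin (i.1 + 1) × Fin (i.1 + 1))) → ℂ :=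
    fun a => B a.1 a.2.1 a.2.2.1 a.2.2.2 * (ε * (d ⟨a.1, a.2.1, a.2.2.1⟩ ^ n)⁻¹)
  have hcnt := count n hn L h M' w B' ⟨r₀, q₀, by simp [M', ← hε, he]⟩ hd1 k₁ k₂ k₃ h12 h13 h23
    (hd2 _ g1) (hd2 _ g2) (hd2 _ g3) _ rfl
  have hz := hF0 _ hcnt
  refine Eq.trans ?_ hz
  refine congrArg (fun f => MvPolynomial.eval f F) (funext fun p => ?_)
  rw [eval_GG, hAB]
  refine Finset.sum_congr rfl fun m _ => ?_
  have hwm : M'.mulVec (veron n (w ⟨p.1, p.2.1, m⟩)) =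
      (ε⁻¹ * d ⟨p.1, p.2.1, m⟩ ^ n) • M.mulVec (veron n (v p.1 p.2.1 m)) := by
    simp only [M', w]
    rw [veron_smul, Matrix.mulVec_smul, Matrix.smul_mulVec, hMS, smul_smul, mul_comm]
  rw [hwm]
  simp only [B', Pi.smul_apply, smul_eq_mul]
  have := hd ⟨p.1, p.2.1, m⟩
  field_simp

end
end

section
/- Let n ≥ 3, let 0 ≤ k ≤ n−2 and d ≥ 1 be integers. Let Λ' ⊂ ℙⁿ(ℂ) be a configuration of linear subspaces, let Γ be a k-dimensional linear subspace, set Λ = Λ' ∪ Γ, and let L = (l₀,…,l_{n−2}) be the weight vector of Λ. Suppose that for generic such Λ' and Γ the Hilbert function satisfies H(Λ, d) = H(Λ', d) + C(d+k, k), and suppose moreover that Σ_{i=0}^{n−2} lᵢ(i+1) − 1 > d·n. Then L is non-feasible: for a generic configuration of weight L, no rational normal curve maximally intersects it. -/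
noncomputable section

/-- The union of all components of a configuration, as a subset of `ℙⁿ`. -/
def configSet {n : ℕ} {L : Fin (n - 1) → ℕ} (A : Config n L) : Set (PP n) :=
  ⋃ i, ⋃ j, projSet (A i j)

/-- The space of degree-`d` homogeneous polynomials in `n+1` variables. -/
def homogDeg (n d : ℕ) : Submodule ℂ (MvPolynomial (Fin (n + 1)) ℂ) :=
  MvPolynomial.homogeneousSubmodule (Fin (n + 1)) ℂ d

/-- The subspace of degree-`d` homogeneous polynomials vanishing identically on a subset
`X ⊆ ℙⁿ`. -/
def vanishOn (n d : ℕ) (X : Set (PP n)) : Submodule ℂ (MvPolynomial (Fin (n + 1)) ℂ) :=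
  homogDeg n d ⊓
    ⨅ P : X, LinearMap.ker (MvPolynomial.aeval (R := ℂ) (P : PP n).rep).toLinearMap

/-- The Hilbert function of `X ⊆ ℙⁿ` in degree `d`: the codimension, inside the space of
all degree-`d` homogeneous polynomials in `n+1` variables, of the subspace of those
vanishing identically on `X`. -/
def HilbF (n d : ℕ) (X : Set (PP n)) : ℕ :=
  Module.finrank ℂ (homogDeg n d) - Module.finrank ℂ (vanishOn n d X)

theorem gen_surj {σ a b : Type*} [Fintype a] [Fintype b] [DecidableEq a] [DecidableEq b]
    (B : Matrix a b (MvPolynomial σ ℂ)) (x0 : σ → ℂ)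
    (h : Function.Surjective (B.map (MvPolynomial.eval x0)).mulVec) :
    ∃ F : MvPolynomial σ ℂ, F ≠ 0 ∧ ∀ x, MvPolynomial.eval x F ≠ 0 →
      Function.Surjective (B.map (MvPolynomial.eval x)).mulVec := by
  obtain ⟨R, hR⟩ := Matrix.mulVec_surjective_iff_exists_right_inverse.1 h
  obtain ⟨R', hR'⟩ : ∃ R' : Matrix b a (MvPolynomial σ ℂ), ∀ i j, R' i j = MvPolynomial.C (R i j) :=
    ⟨fun i j => MvPolynomial.C (R i j), fun _ _ => rfl⟩
  have key : ∀ x, MvPolynomial.eval x (B * R').det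
      = (B.map (MvPolynomial.eval x) * R).det := by
    intro x
    rw [RingHom.map_det, RingHom.mapMatrix_apply, Matrix.map_mul]
    congr 2
    ext i j; simp [hR']
  refine ⟨(B * R').det, ?_, ?_⟩
  · intro h0
    have := key x0
    rw [h0, hR] at this
    simp at this
  · intro x hx
    rw [key] at hx
    intro w
    refine ⟨R.mulVec ((B.map (MvPolynomial.eval x) * R)⁻¹.mulVec w), ?_⟩
    rw [Matrix.mulVec_mulVec, Matrix.mulVec_mulVec, Matrix.mul_nonsing_inv _ (Ne.isUnit hx),
      Matrix.one_mulVec]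

theorem gen_inj {σ a b : Type*} [Fintype a] [Fintype b] [DecidableEq a] [DecidableEq b]
    (B : Matrix a b (MvPolynomial σ ℂ)) (x0 : σ → ℂ)
    (h : ∀ u, (B.map (MvPolynomial.eval x0)).mulVec u = 0 → u = 0) :
    ∃ F : MvPolynomial σ ℂ, F ≠ 0 ∧ ∀ x, MvPolynomial.eval x F ≠ 0 →
      ∀ u, (B.map (MvPolynomial.eval x)).mulVec u = 0 → u = 0 := by
  have : ∃ R : Matrix b a ℂ, R * B.map (MvPolynomial.eval x0) = 1 := by
    obtain ⟨g, hg⟩ := LinearMap.exists_leftInverse_of_injective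
      (Matrix.toLin' (B.map (MvPolynomial.eval x0))) (by
        rw [LinearMap.ker_eq_bot']
        intro u hu; exact h u hu)
    refine ⟨LinearMap.toMatrix' g, ?_⟩
    have := congrArg LinearMap.toMatrix' hg
    rw [LinearMap.toMatrix'_comp] at this
    simpa using this
  obtain ⟨R, hR⟩ := this
  obtain ⟨R', hR'⟩ : ∃ R' : Matrix b a (MvPolynomial σ ℂ), ∀ i j, R' i j = MvPolynomial.C (R i j) :=
    ⟨fun i j => MvPolynomial.C (R i j), fun _ _ => rfl⟩
  have key : ∀ x, MvPolynomial.eval x (R' * B).det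
      = (R * B.map (MvPolynomial.eval x)).det := by
    intro x
    rw [RingHom.map_det, RingHom.mapMatrix_apply, Matrix.map_mul]
    congr 2
    ext i j; simp [hR']
  refine ⟨(R' * B).det, ?_, ?_⟩
  · intro h0
    have := key x0
    rw [h0, hR] at this
    simp at this
  · intro x hx
    rw [key] at hx
    intro u hu
    have h2 : (R * B.map (MvPolynomial.eval x)).mulVec u = 0 := by
      rw [← Matrix.mulVec_mulVec, hu, Matrix.mulVec_zero]
    exact Matrix.eq_zero_of_mulVec_eq_zero hx h2

/-- blocks: disjoint or covering -/
theorem exists_blocks {J : Type*} [Fintype J] [DecidableEq J] (N : ℕ) (q : J → ℕ)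
    (hq : ∀ j, q j ≤ N) :
    ∃ B : J → Finset (Fin N), (∀ j, (B j).card = q j) ∧
      ((∑ j, q j ≤ N) → ∀ i j r, r ∈ B i → r ∈ B j → i = j) ∧
      ((N ≤ ∑ j, q j) → ∀ r, ∃ j, r ∈ B j) := by
  have hc : Fintype.card (Σ j, Fin (q j)) = ∑ j, q j := by simp
  have step : ∀ f : (Σ j, Fin (q j)) → Fin N, ∃ B : J → Finset (Fin N),
      (∀ j, (B j).card = q j) ∧ ∀ j, Finset.univ.image (fun c => f ⟨j, c⟩) ⊆ B j := by
    intro f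
    have : ∀ j, ∃ b : Finset (Fin N), Finset.univ.image (fun c => f ⟨j, c⟩) ⊆ b ∧
        b.card = q j := by
      intro j
      apply Finset.exists_superset_card_eq
      · exact (Finset.card_image_le).trans (by simp)
      · simpa using hq j
    choose B h1 h2 using this
    exact ⟨B, h2, h1⟩
  rcases le_total (∑ j, q j) N with hle | hle
  · obtain ⟨f⟩ := Function.Embedding.nonempty_of_card_le
      (α := Σ j, Fin (q j)) (β := Fin N) (by simpa using hle)
    obtain ⟨B, h1, h2⟩ := step f
    have h3 : ∀ j, Finset.univ.image (fun c => f ⟨j, c⟩) = B j := by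
      intro j
      apply Finset.eq_of_subset_of_card_le (h2 j)
      rw [h1, Finset.card_image_of_injective]
      · simp
      · intro c c' hcc
        simpa using f.injective hcc
    refine ⟨B, h1, ?_, ?_⟩
    · intro _ i j r hi hj
      rw [← h3] at hi hj
      simp only [Finset.mem_image, Finset.mem_univ, true_and] at hi hj
      obtain ⟨c, rfl⟩ := hi
      obtain ⟨c', h⟩ := hj
      exact (congrArg Sigma.fst (f.injective h)).symm
    · intro hge
      have hb : Function.Bijective f := by
        rw [Fintype.bijective_iff_injective_and_card]
        exact ⟨f.injective, by rw [hc]; simp; omega⟩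
      intro r
      obtain ⟨⟨j, c⟩, rfl⟩ := hb.2 r
      exact ⟨j, h2 j (by simp)⟩
  · rcases Nat.lt_or_ge N (∑ j, q j) with hlt | hge
    · obtain ⟨g⟩ := Function.Embedding.nonempty_of_card_le
        (β := Σ j, Fin (q j)) (α := Fin N) (by simpa using hle)
      rcases Nat.eq_zero_or_pos N with h0 | h0
      · subst h0
        refine ⟨fun j => ∅, ?_, ?_, ?_⟩
        · intro j; have := hq j; simp; omega
        · intro _ i j r; exact r.elim0
        · intro _ r; exact r.elim0
      have : Nonempty (Fin N) := ⟨⟨0, h0⟩⟩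
      obtain ⟨B, h1, h2⟩ := step (Function.invFun g)
      refine ⟨B, h1, fun h => by omega, ?_⟩
      intro _ r
      refine ⟨(g r).1, h2 _ ?_⟩
      simp only [Finset.mem_image, Finset.mem_univ, true_and]
      exact ⟨(g r).2, Function.leftInverse_invFun g.injective r⟩
    · obtain ⟨f⟩ : Nonempty ((Σ j, Fin (q j)) ≃ Fin N) :=
        ⟨Fintype.equivFinOfCardEq (by rw [hc]; omega)⟩
      obtain ⟨B, h1, h2⟩ := step f
      have h3 : ∀ j, Finset.univ.image (fun c => f ⟨j, c⟩) = B j := by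
        intro j
        apply Finset.eq_of_subset_of_card_le (h2 j)
        rw [h1, Finset.card_image_of_injective]
        · simp
        · intro c c' hcc
          simpa using f.injective hcc
      refine ⟨B, h1, ?_, ?_⟩
      · intro _ i j r hi hj
        rw [← h3] at hi hj
        simp only [Finset.mem_image, Finset.mem_univ, true_and] at hi hj
        obtain ⟨c, rfl⟩ := hi
        obtain ⟨c', h⟩ := hj
        exact (congrArg Sigma.fst (f.injective h)).symm
      · intro _ r
        obtain ⟨⟨j, c⟩, rfl⟩ := f.surjective r
        exact ⟨j, h2 j (by simp)⟩

/-- the big matrix -/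
def bigMat {J : Type*} [DecidableEq J] {R : Type*} [CommRing R] (N : ℕ) (m : J → ℕ)
    (A : ∀ j, Matrix (Fin N) (Fin (m j)) R) :
    Matrix (J × Fin N) (Fin N ⊕ Σ j, Fin (m j)) R :=
  fun p s => match s with
    | Sum.inl r => if p.2 = r then 1 else 0
    | Sum.inr c => if p.1 = c.1 then A c.1 p.2 c.2 else 0

theorem bigMat_mulVec {J : Type*} [DecidableEq J] [Fintype J] {N : ℕ} {m : J → ℕ}
    (A : ∀ j, Matrix (Fin N) (Fin (m j)) ℂ) (u) (j : J) (r : Fin N) :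
    (bigMat N m A).mulVec u (j, r)
      = u (Sum.inl r) + (A j).mulVec (fun c => u (Sum.inr ⟨j, c⟩)) r := by
  simp only [Matrix.mulVec, dotProduct, Fintype.sum_sum_type, bigMat]
  congr 1
  · simp
  · rw [Fintype.sum_sigma, Finset.sum_eq_single j]
    · simp
    · intro b _ hb
      simp [Ne.symm hb]
    · simp

theorem bigMat_map {J : Type*} [DecidableEq J] {N : ℕ} {m : J → ℕ}
    {R S : Type*} [CommRing R] [CommRing S] (φ : R →+* S)
    (A : ∀ j, Matrix (Fin N) (Fin (m j)) R) :
    (bigMat N m A).map φ = bigMat N m (fun j => (A j).map φ) := by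
  ext p s
  rcases s with r | c
  · simp only [bigMat, Matrix.map_apply]; split_ifs <;> simp
  · simp only [bigMat, Matrix.map_apply]; split_ifs <;> simp

theorem exists_special {J : Type*} [Fintype J] [DecidableEq J] (N : ℕ) (m : J → ℕ)
    (hm : ∀ j, m j ≤ N) : ∃ A : ∀ j, Matrix (Fin N) (Fin (m j)) ℂ,
      ((∑ j, (N - m j) ≤ N) → Function.Surjective (bigMat N m A).mulVec) ∧
      ((N ≤ ∑ j, (N - m j)) → ∀ u, (bigMat N m A).mulVec u = 0 → u = 0) := by
  obtain ⟨B, h1, h2, h3⟩ := exists_blocks N (fun j => N - m j) (fun j => Nat.sub_le _ _)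
  have hcard : ∀ j, ((B j)ᶜ).card = m j := by
    intro j; rw [Finset.card_compl, h1]; have := hm j; simp; omega
  let e : ∀ j, Fin (m j) ≃ ((B j)ᶜ : Finset (Fin N)) := fun j =>
    (Finset.equivFinOfCardEq (hcard j)).symm
  let A : ∀ j, Matrix (Fin N) (Fin (m j)) ℂ := fun j r c => if r = (e j c : Fin N) then 1 else 0
  have hA1 : ∀ j c r, r ∈ B j → (A j).mulVec c r = 0 := by
    intro j c r hr
    simp only [Matrix.mulVec, dotProduct, A]
    apply Finset.sum_eq_zero
    intro x _
    rw [if_neg, zero_mul]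
    rintro rfl
    exact (Finset.mem_compl.1 (e j x).2) hr
  have hA2 : ∀ j c x, (A j).mulVec c (e j x : Fin N) = c x := by
    intro j c x
    simp only [Matrix.mulVec, dotProduct, A]
    rw [Finset.sum_eq_single x]
    · simp
    · intro y _ hy
      rw [if_neg, zero_mul]
      intro h
      exact hy ((e j).injective (Subtype.ext h)).symm
    · simp
  refine ⟨A, ?_, ?_⟩
  · intro hle w
    classical
    let v : Fin N → ℂ := fun r => if h : ∃ j, r ∈ B j then w (h.choose, r) else 0
    have hv : ∀ j r, r ∈ B j → v r = w (j, r) := by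
      intro j r hr
      have h : ∃ j, r ∈ B j := ⟨j, hr⟩
      simp only [v, dif_pos h]
      rw [h2 hle _ _ r h.choose_spec hr]
    refine ⟨Sum.elim v (fun c => w (c.1, (e c.1 c.2 : Fin N)) - v (e c.1 c.2 : Fin N)), ?_⟩
    ext ⟨j, r⟩
    rw [bigMat_mulVec]
    simp only [Sum.elim_inl, Sum.elim_inr]
    by_cases hr : r ∈ B j
    · rw [hA1 _ _ _ hr, hv _ _ hr, add_zero]
    · obtain ⟨x, hx⟩ := (e j).surjective ⟨r, Finset.mem_compl.2 hr⟩
      have hx' : (e j x : Fin N) = r := by rw [hx]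
      rw [← hx', hA2]; ring
  · intro hge u hu
    have hu' : ∀ j r, u (Sum.inl r) + (A j).mulVec (fun c => u (Sum.inr ⟨j, c⟩)) r = 0 := by
      intro j r
      rw [← bigMat_mulVec, hu]; rfl
    have hl : ∀ r, u (Sum.inl r) = 0 := by
      intro r
      obtain ⟨j, hj⟩ := h3 hge r
      have := hu' j r
      rwa [hA1 _ _ _ hj, add_zero] at this
    ext s
    rcases s with r | ⟨j, c⟩
    · exact hl r
    · have := hu' j (e j c)
      rw [hA2, hl, zero_add] at this
      exact this

/-- full transversality for one finite family -/
theorem trans_one {J : Type*} [Fintype J] [DecidableEq J] (N : ℕ) (m : J → ℕ)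
    (hm : ∀ j, m j ≤ N) : ∃ F : MvPolynomial (Σ j, Fin N × Fin (m j)) ℂ, F ≠ 0 ∧
      ∀ A : ∀ j, Matrix (Fin N) (Fin (m j)) ℂ,
        MvPolynomial.eval (fun p => A p.1 p.2.1 p.2.2) F ≠ 0 →
        ((∑ j, (N - m j) ≤ N) → ∀ w : J → Fin N → ℂ, ∃ v, ∀ j, ∃ c, (A j).mulVec c = v - w j) ∧
        ((N ≤ ∑ j, (N - m j)) → ∀ v, (∀ j, ∃ c, (A j).mulVec c = v) → v = 0) := by
  obtain ⟨A0, hs, hi⟩ := exists_special N m hm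
  obtain ⟨Bp, hB⟩ : ∃ Bp : Matrix (J × Fin N) (Fin N ⊕ Σ j, Fin (m j))
    (MvPolynomial (Σ j, Fin N × Fin (m j)) ℂ), ∀ A : ∀ j, Matrix (Fin N) (Fin (m j)) ℂ,
      Bp.map (MvPolynomial.eval
        (fun p : (Σ j, Fin N × Fin (m j)) => A p.1 p.2.1 p.2.2)) = bigMat N m A := by
    refine ⟨bigMat N m (fun j => Matrix.of fun r c => MvPolynomial.X ⟨j, r, c⟩), fun A => ?_⟩
    rw [bigMat_map]
    congr 1
    ext j r c
    simp
  have P1 : ∃ F : MvPolynomial (Σ j, Fin N × Fin (m j)) ℂ, F ≠ 0 ∧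
      ∀ A : ∀ j, Matrix (Fin N) (Fin (m j)) ℂ,
        MvPolynomial.eval (fun p => A p.1 p.2.1 p.2.2) F ≠ 0 →
        ((∑ j, (N - m j) ≤ N) → Function.Surjective (bigMat N m A).mulVec) := by
    by_cases hle : ∑ j, (N - m j) ≤ N
    · obtain ⟨F, h0, hF⟩ := gen_surj Bp (fun p => A0 p.1 p.2.1 p.2.2) (by rw [hB]; exact hs hle)
      exact ⟨F, h0, fun A hA _ => by have := hF _ hA; rwa [hB] at this⟩
    · exact ⟨1, one_ne_zero, fun _ _ h => absurd h hle⟩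
  have P2 : ∃ F : MvPolynomial (Σ j, Fin N × Fin (m j)) ℂ, F ≠ 0 ∧
      ∀ A : ∀ j, Matrix (Fin N) (Fin (m j)) ℂ,
        MvPolynomial.eval (fun p => A p.1 p.2.1 p.2.2) F ≠ 0 →
        ((N ≤ ∑ j, (N - m j)) → ∀ u, (bigMat N m A).mulVec u = 0 → u = 0) := by
    by_cases hle : N ≤ ∑ j, (N - m j)
    · obtain ⟨F, h0, hF⟩ := gen_inj Bp (fun p => A0 p.1 p.2.1 p.2.2) (by rw [hB]; exact hi hle)
      exact ⟨F, h0, fun A hA _ => by have := hF _ hA; rwa [hB] at this⟩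
    · exact ⟨1, one_ne_zero, fun _ _ h => absurd h hle⟩
  obtain ⟨F1, h1, hF1⟩ := P1
  obtain ⟨F2, h2, hF2⟩ := P2
  refine ⟨F1 * F2, mul_ne_zero h1 h2, fun A hA => ?_⟩
  rw [map_mul] at hA
  refine ⟨fun hle w => ?_, fun hge v hv => ?_⟩
  · obtain ⟨u, hu⟩ := hF1 A (left_ne_zero_of_mul hA) hle (fun p => w p.1 p.2)
    refine ⟨fun r => u (Sum.inl r), fun j => ⟨-(fun c => u (Sum.inr ⟨j, c⟩)), ?_⟩⟩
    ext r
    have := congrFun hu (j, r)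
    rw [bigMat_mulVec] at this
    rw [Matrix.mulVec_neg]
    simp only [Pi.neg_apply, Pi.sub_apply]
    rw [← this]; ring
  · choose c hc using hv
    have := hF2 A (right_ne_zero_of_mul hA) hge (Sum.elim v (fun x => - c x.1 x.2)) (by
      ext ⟨j, r⟩
      rw [bigMat_mulVec]
      have h := congrFun (hc j) r
      have h' : (A j).mulVec (fun x => - c j x) r = - (A j).mulVec (c j) r := by
        rw [show (fun x => - c j x) = - c j from rfl, Matrix.mulVec_neg]; rfl
      simp only [Sum.elim_inl, Sum.elim_inr, Pi.zero_apply]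
      rw [h', h]; ring)
    ext r
    exact congrFun this (Sum.inl r)

theorem trans_all {J : Type*} [Fintype J] [DecidableEq J] (N : ℕ) (m : J → ℕ)
    (hm : ∀ j, m j ≤ N) : ∃ F : MvPolynomial (Σ j, Fin N × Fin (m j)) ℂ, F ≠ 0 ∧
      ∀ A : ∀ j, Matrix (Fin N) (Fin (m j)) ℂ,
        MvPolynomial.eval (fun p => A p.1 p.2.1 p.2.2) F ≠ 0 → ∀ S : Finset J,
        ((∑ j : S, (N - m j) ≤ N) →
          ∀ w : S → Fin N → ℂ, ∃ v, ∀ j : S, ∃ c, (A j).mulVec c = v - w j) ∧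
        ((N ≤ ∑ j : S, (N - m j)) → ∀ v, (∀ j : S, ∃ c, (A j).mulVec c = v) → v = 0) := by
  have := fun S : Finset J => trans_one (J := S) N (fun j => m j) (fun j => hm j)
  choose F h0 hF using this
  let φ : ∀ S : Finset J, (Σ j : S, Fin N × Fin (m j)) → (Σ j, Fin N × Fin (m j)) :=
    fun S p => ⟨p.1, p.2⟩
  have hφ : ∀ S, Function.Injective (φ S) := by
    rintro S ⟨⟨j, hj⟩, p⟩ ⟨⟨j', hj'⟩, p'⟩ h
    simp only [φ, Sigma.mk.injEq] at h
    obtain ⟨rfl, h⟩ := h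
    simpa using h
  refine ⟨∏ S : Finset J, MvPolynomial.rename (φ S) (F S), ?_, ?_⟩
  · rw [Finset.prod_ne_zero_iff]
    intro S _
    rw [Ne, MvPolynomial.rename_eq_zero_iff_of_injective _ (hφ S)]
    exact h0 S
  · intro A hA S
    rw [map_prod, Finset.prod_ne_zero_iff] at hA
    have := hA S (Finset.mem_univ _)
    rw [MvPolynomial.eval_rename] at this
    exact hF S (fun j => A j) this

theorem coeff_of_vanish {ι R : Type*} [Fintype ι] [CommRing R] [IsDomain R] [Infinite R]
    (g : MvPolynomial ι R) (j : ι) (h : ∀ s : ι → R, s j = 0 → MvPolynomial.eval s g = 0)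
    (m : ι →₀ ℕ) (hm : m j = 0) : MvPolynomial.coeff m g = 0 := by
  classical
  have h1 : MvPolynomial.aeval (Function.update MvPolynomial.X j (0 : MvPolynomial ι R)) g = 0 := by
    apply MvPolynomial.funext
    intro s
    rw [map_zero, ← h (Function.update s j 0) (by simp)]
    rw [MvPolynomial.aeval_def, MvPolynomial.eval_eval₂]
    rw [MvPolynomial.eval, MvPolynomial.coe_eval₂Hom]
    congr 1
    · ext; simp
    · ext i
      by_cases hi : i = j
      · subst hi; simp
      · simp [hi]
  have h2 : ∀ p : MvPolynomial ι R, MvPolynomial.coeff m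
      (MvPolynomial.aeval (Function.update MvPolynomial.X j (0 : MvPolynomial ι R)) p)
        = MvPolynomial.coeff m p := by
    intro p
    induction p using MvPolynomial.induction_on' with
    | add p q ihp ihq => rw [map_add, MvPolynomial.coeff_add, MvPolynomial.coeff_add, ihp, ihq]
    | monomial a b =>
      rw [MvPolynomial.aeval_monomial]
      by_cases hj : a j = 0
      · rw [MvPolynomial.monomial_eq]
        congr 2
        apply Finsupp.prod_congr
        intro i hi
        have : i ≠ j := by rintro rfl; simp [hj] at hi
        simp [this]
      · rw [MvPolynomial.coeff_monomial, if_neg (by rintro rfl; exact hj hm)]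
        have : (a.prod fun i k => Function.update MvPolynomial.X j (0 : MvPolynomial ι R) i ^ k) = 0 := by
          apply Finset.prod_eq_zero (i := j) (by simp [hj])
          simp [hj]
        rw [this]; simp
  rw [← h2, h1]; simp

theorem pow_dvd_of_vanish {ι R : Type*} [Fintype ι] [CommRing R] [IsDomain R] [Infinite R]
    (g : MvPolynomial ι R) (h : ∀ j, ∀ s : ι → R, s j = 0 → MvPolynomial.eval s g = 0) (t : R) :
    t ^ Fintype.card ι ∣ MvPolynomial.eval (fun _ => t) g := by
  rw [MvPolynomial.eval_eq']
  apply Finset.dvd_sum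
  intro m hm
  apply Dvd.dvd.mul_left
  rw [Finset.prod_pow_eq_pow_sum]
  apply pow_dvd_pow
  rw [← Finset.card_univ, Finset.card_eq_sum_ones]
  apply Finset.sum_le_sum
  intro j _
  rw [Nat.one_le_iff_ne_zero]
  intro h0
  exact (MvPolynomial.mem_support_iff.1 hm) (coeff_of_vanish g j (h j) m h0)

open Polynomial in
theorem mult_lemma {ι : Type*} [Fintype ι] [DecidableEq ι] {N : ℕ}
    (f : MvPolynomial (Fin N) ℂ)
    (W : ι → Submodule ℂ (Fin N → ℂ)) (hf : ∀ j, ∀ x ∈ W j, MvPolynomial.eval x f = 0)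
    (tr : ∀ w : ι → Fin N → ℂ, ∃ v, ∀ j, v - w j ∈ W j)
    (γ : Fin N → ℂ[X]) (s0 : ℂ) (hp : ∀ j, (fun a => (γ a).eval s0) ∈ W j) :
    (X - C s0) ^ Fintype.card ι ∣ MvPolynomial.aeval γ f := by
  have h1 : ∀ a, ∃ δ, γ a - C ((γ a).eval s0) = (X - C s0) * δ := fun a =>
    X_sub_C_dvd_sub_C_eval
  choose δ hδ using h1
  have h2 : ∀ (i : ι) (a : Fin N), ∃ v : Fin N → ℂ, v - Pi.single a 1 ∈ W i ∧
      ∀ j, j ≠ i → v ∈ W j := by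
    intro i a
    obtain ⟨v, hv⟩ := tr (fun j => if j = i then Pi.single a 1 else 0)
    refine ⟨v, by simpa using hv i, fun j hj => by simpa [hj] using hv j⟩
  choose q hq1 hq2 using h2
  let v : ι → Fin N → ℂ[X] := fun i b => ∑ a, δ a * C (q i a b)
  let u : Fin N → ℂ[X] := fun b => γ b - (X - C s0) * ∑ i, v i b
  let g : MvPolynomial ι ℂ[X] :=
    MvPolynomial.aeval (fun b => MvPolynomial.C (u b) + ∑ i, MvPolynomial.X i * MvPolynomial.C (v i b)) f
  have hg : ∀ s : ι → ℂ[X], MvPolynomial.eval s g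
      = MvPolynomial.aeval (fun b => u b + ∑ i, s i * v i b) f := by
    intro s
    simp only [g]
    rw [MvPolynomial.aeval_def, MvPolynomial.eval_eval₂, MvPolynomial.aeval_def]
    congr 1
    · refine RingHom.ext fun z => ?_
      rw [RingHom.comp_apply, IsScalarTower.algebraMap_apply ℂ ℂ[X] (MvPolynomial ι ℂ[X]),
        MvPolynomial.algebraMap_eq, MvPolynomial.eval_C]
    · ext b; simp
  have hev : ∀ (y : Fin N → ℂ[X]) (τ : ℂ), (MvPolynomial.aeval y f).eval τ
      = MvPolynomial.eval (fun b => (y b).eval τ) f := by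
    intro y τ
    rw [MvPolynomial.aeval_def, ← Polynomial.coe_evalRingHom, MvPolynomial.hom_eval₂,
      MvPolynomial.eval, MvPolynomial.coe_eval₂Hom]
    congr 1
    ext; simp
  have hvan : ∀ j, ∀ s : ι → ℂ[X], s j = 0 → MvPolynomial.eval s g = 0 := by
    intro j s hs
    rw [hg]
    apply Polynomial.funext
    intro τ
    rw [hev, eval_zero]
    apply hf j
    have hvi : ∀ i, (fun b => (v i b).eval τ) = ∑ a, (δ a).eval τ • q i a := by
      intro i; ext b
      simp [v, eval_finsetSum]
    have hδτ : ∀ b, (γ b).eval τ = (γ b).eval s0 + (τ - s0) * (δ b).eval τ := by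
      intro b
      have := congrArg (Polynomial.eval τ) (hδ b)
      simp at this
      rw [← this]; ring
    have e : (fun b => (u b + ∑ i, s i * v i b).eval τ)
        = (fun a => (γ a).eval s0) - (τ - s0) • (∑ a, (δ a).eval τ • (q j a - Pi.single a 1))
          + ∑ i ∈ Finset.univ.erase j, ((s i).eval τ - (τ - s0)) • ∑ a, (δ a).eval τ • q i a := by
      have e1 : ∀ b, (∑ a, (δ a).eval τ • (q j a - (Pi.single a 1 : Fin N → ℂ))) b
          = (v j b).eval τ - (δ b).eval τ := by
        intro b
        have := congrFun (hvi j) b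
        rw [this]
        simp [Finset.sum_apply, mul_sub, Pi.single_apply]
      ext b
      rw [Pi.add_apply, Pi.sub_apply, Pi.smul_apply, e1, Finset.sum_apply]
      simp only [Pi.smul_apply]
      have e2 : ∀ i, (∑ a, (δ a).eval τ • q i a) b = (v i b).eval τ := fun i =>
        (congrFun (hvi i) b).symm
      simp only [e2, u, smul_eq_mul]
      simp only [eval_add, eval_sub, eval_mul, eval_X, eval_C, eval_finsetSum, hδτ b]
      rw [← Finset.add_sum_erase _ _ (Finset.mem_univ j),
        ← Finset.add_sum_erase _ (fun i => (s i).eval τ * (v i b).eval τ) (Finset.mem_univ j), hs]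
      simp only [sub_mul, Finset.sum_sub_distrib, ← Finset.mul_sum, eval_zero]
      ring
    rw [e]
    refine add_mem (sub_mem (hp j) (Submodule.smul_mem _ _ (sum_mem fun a _ =>
      Submodule.smul_mem _ _ (hq1 j a)))) (sum_mem fun i hi => Submodule.smul_mem _ _
        (sum_mem fun a _ => Submodule.smul_mem _ _ (hq2 i a j ?_)))
    exact (Finset.ne_of_mem_erase hi).symm
  have := pow_dvd_of_vanish g hvan (X - C s0)
  rw [hg] at this
  convert this using 3
  ext b
  simp only [u, Finset.mul_sum, sub_add_cancel]

open Polynomial in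
theorem bez_count {J : Type*} [Fintype J] [DecidableEq J] (h : ℂ[X]) (h0 : h ≠ 0)
    (T : J → Finset ℂ) (TG : Finset ℂ) (hdisj : ∀ s ∈ TG, ∀ j, s ∉ T j)
    (hG : ∀ s ∈ TG, h.eval s = 0)
    (hT : ∀ s, (X - C s) ^ (Finset.univ.filter (fun j => s ∈ T j)).card ∣ h) :
    (∑ j, (T j).card) + TG.card ≤ h.natDegree := by
  let U := Finset.univ.biUnion T
  have hUG : Disjoint U TG := by
    rw [Finset.disjoint_left]
    intro s hs hG
    obtain ⟨j, _, hj⟩ := Finset.mem_biUnion.1 hs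
    exact hdisj s hG j hj
  have e1 : ∑ j, (T j).card = ∑ s ∈ U, (Finset.univ.filter (fun j => s ∈ T j)).card := by
    have := Finset.sum_card_bipartiteAbove_eq_sum_card_bipartiteBelow
      (s := (Finset.univ : Finset J)) (t := U) (fun j s => s ∈ T j)
    simp only [Finset.bipartiteAbove, Finset.bipartiteBelow] at this
    rw [← this]
    apply Finset.sum_congr rfl
    intro j _
    congr 1
    ext s
    simp only [Finset.mem_filter, U, Finset.mem_biUnion, Finset.mem_univ, true_and]
    exact ⟨fun h => ⟨⟨j, h⟩, h⟩, fun h => h.2⟩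
  have e2 : TG.card = ∑ s ∈ TG, 1 := Finset.card_eq_sum_ones _
  calc _ ≤ ∑ s ∈ U, h.roots.count s + ∑ s ∈ TG, h.roots.count s := by
        rw [e1, e2]
        refine add_le_add (Finset.sum_le_sum fun s _ => ?_) (Finset.sum_le_sum fun s hs => ?_)
        · rw [count_roots]
          exact (le_rootMultiplicity_iff h0).2 (hT s)
        · rw [Multiset.one_le_count_iff_mem, mem_roots h0]
          exact hG s hs
    _ = ∑ s ∈ U ∪ TG, h.roots.count s := (Finset.sum_union hUG).symm
    _ ≤ Multiset.card h.roots := by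
        rw [← Multiset.toFinset_sum_count_eq]
        apply Finset.sum_le_sum_of_ne_zero
        intro s _ hs
        rw [Multiset.mem_toFinset]
        exact Multiset.count_ne_zero.1 hs
    _ ≤ _ := card_roots' h

theorem hom_eval_smul {σ : Type*} {f : MvPolynomial σ ℂ} {d : ℕ} (hf : f.IsHomogeneous d)
    (c : ℂ) (x : σ → ℂ) : MvPolynomial.eval (c • x) f = c ^ d * MvPolynomial.eval x f := by
  rw [MvPolynomial.eval_eq, MvPolynomial.eval_eq, Finset.mul_sum]
  apply Finset.sum_congr rfl
  intro m hm
  have := hf (MvPolynomial.mem_support_iff.1 hm)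
  rw [← this, Finsupp.weight_apply, Finsupp.sum, ]
  simp only [Pi.smul_apply, smul_eq_mul, mul_pow, Finset.prod_mul_distrib, Finset.prod_pow_eq_pow_sum,
    Pi.one_apply, mul_one]
  ring

theorem mem_vanishOn {n d : ℕ} {X : Set (PP n)} {f} : f ∈ vanishOn n d X ↔
    f.IsHomogeneous d ∧ ∀ P ∈ X, MvPolynomial.eval P.rep f = 0 := by
  simp only [vanishOn, homogDeg, Submodule.mem_inf, MvPolynomial.mem_homogeneousSubmodule,
    Submodule.mem_iInf, LinearMap.mem_ker, AlgHom.toLinearMap_apply, Subtype.forall]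
  rfl

theorem vanish_proj {n d m : ℕ} (hd : 1 ≤ d) {A : Matrix (Fin (n + 1)) (Fin m) ℂ} {f}
    (hf : MvPolynomial.IsHomogeneous f d) :
    (∀ P ∈ projSet A, MvPolynomial.eval P.rep f = 0) ↔
    ∀ x ∈ Submodule.span ℂ (Set.range fun j => fun r => A r j), MvPolynomial.eval x f = 0 := by
  constructor
  · intro h x hx
    by_cases h0 : x = 0
    · have := hom_eval_smul hf 0 x
      rw [h0] at *
      rw [smul_zero, zero_pow (by omega), zero_mul] at this
      exact this
    · obtain ⟨a, ha⟩ := Projectivization.exists_smul_eq_mk_rep ℂ x h0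
      have h1 := h (Projectivization.mk ℂ x h0) (by
        simp only [projSet, Set.mem_ofPred_eq, ← ha]
        exact Submodule.smul_mem _ (a : ℂ) hx)
      rw [← ha] at h1
      have h2 := hom_eval_smul hf (a : ℂ) x
      have h3 : MvPolynomial.eval ((a : ℂ) • x) f = 0 := h1
      rw [h3] at h2
      have h4 : (a : ℂ) ^ d ≠ 0 := pow_ne_zero _ a.ne_zero
      exact (mul_eq_zero.1 h2.symm).resolve_left h4
  · intro h P hP
    exact h _ hP

theorem mem_span_cols {N m : ℕ} (A : Matrix (Fin N) (Fin m) ℂ) (x : Fin N → ℂ) :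
    x ∈ Submodule.span ℂ (Set.range fun j => fun r => A r j) ↔ ∃ c, A.mulVec c = x := by
  have : Submodule.span ℂ (Set.range fun j => fun r => A r j) = LinearMap.range A.mulVecLin := by
    rw [Matrix.range_mulVecLin]; rfl
  rw [this]; rfl

theorem finrank_hom_le (k d : ℕ) :
    Module.finrank ℂ (MvPolynomial.homogeneousSubmodule (Fin (k + 1)) ℂ d) ≤ (d + k).choose k := by
  classical
  let s : Finset (MvPolynomial (Fin (k + 1)) ℂ) :=
    (Finset.finsuppAntidiag Finset.univ d).image (fun m => MvPolynomial.monomial m (1 : ℂ))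
  have h1 : MvPolynomial.homogeneousSubmodule (Fin (k + 1)) ℂ d ≤ Submodule.span ℂ (s : Set _) := by
    intro p hp
    rw [MvPolynomial.mem_homogeneousSubmodule] at hp
    rw [p.as_sum]
    apply Submodule.sum_mem
    intro m hm
    have e : MvPolynomial.monomial m (MvPolynomial.coeff m p)
      = MvPolynomial.coeff m p • MvPolynomial.monomial m (1 : ℂ) := by
        rw [MvPolynomial.smul_monomial, smul_eq_mul, mul_one]
    rw [e]
    apply Submodule.smul_mem
    apply Submodule.subset_span
    simp only [s, Finset.coe_image, Set.mem_image, Finset.mem_coe]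
    refine ⟨m, ?_, rfl⟩
    have := hp (MvPolynomial.mem_support_iff.1 hm)
    rw [Finset.mem_finsuppAntidiag]
    refine ⟨?_, Finset.subset_univ _⟩
    rw [← this, Finsupp.weight_apply, Finsupp.sum_fintype _ _ (by simp)]
    simp
  have h2 : s.card ≤ (d + k).choose k := by
    refine Finset.card_image_le.trans ?_
    rw [Finset.card_finsuppAntidiag_nat_eq_choose]
    simp only [Finset.card_univ, Fintype.card_fin]
    rw [show k + 1 + d - 1 = d + k by omega, Nat.choose_symm_add]
  exact (Submodule.finrank_mono h1).trans ((finrank_span_finset_le_card s).trans h2)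

theorem exists_form {n k d : ℕ} (hd : 1 ≤ d) (X : Set (PP n))
    (G : Matrix (Fin (n + 1)) (Fin (k + 1)) ℂ)
    (H : HilbF n d (X ∪ projSet G) = HilbF n d X + (d + k).choose k) (l : Fin (n + 1) → ℂ) :
    ∃ f ∈ vanishOn n d X, ∀ x ∈ Submodule.span ℂ (Set.range fun j => fun r => G r j),
      MvPolynomial.eval x f = (∑ a, l a * x a) ^ d := by
  let Gp : Fin (n + 1) → MvPolynomial (Fin (k + 1)) ℂ :=
    fun a => ∑ c, MvPolynomial.C (G a c) * MvPolynomial.X c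
  have hGp : ∀ a, (Gp a).IsHomogeneous 1 := by
    intro a
    apply MvPolynomial.IsHomogeneous.sum
    intro c _
    simpa using (MvPolynomial.isHomogeneous_C (Fin (k + 1)) (G a c)).mul
      (MvPolynomial.isHomogeneous_X ℂ c)
  have hGe : ∀ y, (fun a => MvPolynomial.eval y (Gp a)) = G.mulVec y := by
    intro y; ext a; simp [Gp, Matrix.mulVec, dotProduct]
  let ρ : MvPolynomial (Fin (n + 1)) ℂ →ₗ[ℂ] MvPolynomial (Fin (k + 1)) ℂ :=
    (MvPolynomial.aeval Gp).toLinearMap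
  have hρ : ∀ f y, MvPolynomial.eval y (ρ f) = MvPolynomial.eval (G.mulVec y) f := by
    intro f y
    rw [← hGe]
    simp only [ρ, AlgHom.toLinearMap_apply]
    rw [MvPolynomial.aeval_def, MvPolynomial.eval_eval₂, MvPolynomial.eval, MvPolynomial.coe_eval₂Hom]
    congr 1
    refine RingHom.ext fun z => ?_
    simp [MvPolynomial.algebraMap_eq]
  have hρh : ∀ f ∈ vanishOn n d X, ρ f ∈ MvPolynomial.homogeneousSubmodule (Fin (k + 1)) ℂ d := by
    intro f hf
    have := (mem_vanishOn.1 hf).1.aeval Gp hGp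
    rw [one_mul] at this
    exact this
  have hfin : ∀ m e, Module.Finite ℂ (MvPolynomial.homogeneousSubmodule (Fin m) ℂ e) := fun m e =>
    Module.Finite.iff_fg.2 (MvPolynomial.homogeneousSubmodule_fg _ _ _)
  have hfin1 : Module.Finite ℂ (homogDeg n d) := hfin _ _
  have hfin2 := hfin (k + 1) d
  have hle : ∀ Y, vanishOn n d Y ≤ homogDeg n d := fun Y => inf_le_left
  have hfin3 : Module.Finite ℂ (vanishOn n d X) :=
    Submodule.finiteDimensional_of_le (hle X)
  let ρ' := ρ.restrict hρh
  have hker : Module.finrank ℂ (LinearMap.ker ρ') = Module.finrank ℂ (vanishOn n d (X ∪ projSet G)) := by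
    rw [← Submodule.finrank_map_subtype_eq]
    have : Submodule.map (vanishOn n d X).subtype (LinearMap.ker ρ') = vanishOn n d (X ∪ projSet G) := by
      ext f
      rw [Submodule.mem_map]
      constructor
      · rintro ⟨⟨g, hg⟩, hk, rfl⟩
        have hk' : ρ g = 0 := congrArg Subtype.val (LinearMap.mem_ker.1 hk)
        have hg' := mem_vanishOn.1 hg
        refine mem_vanishOn.2 ⟨hg'.1, ?_⟩
        rintro P (hP | hP)
        · exact hg'.2 P hP
        · refine (vanish_proj hd hg'.1).2 ?_ P hP
          intro x hx
          obtain ⟨y, rfl⟩ := (mem_span_cols _ _).1 hx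
          change MvPolynomial.eval (G.mulVec y) g = 0
          rw [← hρ, hk', map_zero]
      · intro hf
        have hf' := mem_vanishOn.1 hf
        have hfX : f ∈ vanishOn n d X := mem_vanishOn.2 ⟨hf'.1, fun P hP => hf'.2 P (Or.inl hP)⟩
        refine ⟨⟨f, hfX⟩, ?_, rfl⟩
        rw [LinearMap.mem_ker]
        apply Subtype.ext
        change ρ f = 0
        apply MvPolynomial.funext
        intro y
        rw [hρ, map_zero]
        exact (vanish_proj hd hf'.1).1 (fun P hP => hf'.2 P (Or.inr hP)) _
          ((mem_span_cols _ _).2 ⟨y, rfl⟩)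
    rw [this]
  have hrn := LinearMap.finrank_range_add_finrank_ker ρ'
  have hm1 := Submodule.finrank_mono (hle X)
  have hm2 := Submodule.finrank_mono (hle (X ∪ projSet G))
  have hb := finrank_hom_le k d
  unfold HilbF at H
  have htop : LinearMap.range ρ' = ⊤ := by
    apply Submodule.eq_top_of_finrank_eq
    apply le_antisymm (Submodule.finrank_le _)
    omega
  let q : MvPolynomial (Fin (k + 1)) ℂ := (∑ a, MvPolynomial.C (l a) * Gp a) ^ d
  have hq : q ∈ MvPolynomial.homogeneousSubmodule (Fin (k + 1)) ℂ d := by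
    have : (∑ a, MvPolynomial.C (l a) * Gp a).IsHomogeneous 1 := by
      apply MvPolynomial.IsHomogeneous.sum
      intro c _
      simpa using (MvPolynomial.isHomogeneous_C (Fin (k + 1)) (l c)).mul (hGp c)
    simpa using this.pow d
  obtain ⟨⟨f, hf⟩, hfq⟩ := LinearMap.range_eq_top.1 htop ⟨q, hq⟩
  refine ⟨f, hf, ?_⟩
  intro x hx
  obtain ⟨y, rfl⟩ := (mem_span_cols _ _).1 hx
  have hfq' : ρ f = q := congrArg Subtype.val hfq
  rw [← hρ, hfq', ← hGe]
  simp [q]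

theorem exists_functional {n : ℕ} (M : Matrix (Fin (n + 1)) (Fin (n + 1)) ℂ) (hM : IsUnit M.det)
    (z s0 : ℂ) (T : Finset ℂ) (h0 : s0 ∉ T) (hT : T.card ≤ n) :
    ∃ l : Fin (n + 1) → ℂ, ∑ a, l a * M.mulVec (veron n ![s0, 1 + s0 * z]) a ≠ 0 ∧
      ∀ s ∈ T, ∑ a, l a * M.mulVec (veron n ![s, 1 + s * z]) a = 0 := by
  classical
  obtain ⟨T', hTT', hcard⟩ := Infinite.exists_superset_card_eq (insert s0 T) (n + 1)
    (by rw [Finset.card_insert_of_notMem h0]; omega)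
  let e : Fin (n + 1) ≃ T' := (Finset.equivFinOfCardEq hcard).symm
  let V : Matrix (Fin (n + 1)) (Fin (n + 1)) ℂ :=
    Matrix.projVandermonde (fun i => (e i : ℂ)) (fun i => 1 + (e i : ℂ) * z)
  have hV : IsUnit V.det := by
    rw [Matrix.det_projVandermonde, isUnit_iff_ne_zero, Finset.prod_ne_zero_iff]
    intro i _
    rw [Finset.prod_ne_zero_iff]
    intro j hj h
    have h1 : (e j : ℂ) = e i := by linear_combination h
    have := e.injective (Subtype.ext h1)
    rw [Finset.mem_Ioi] at hj
    exact absurd this hj.ne'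
  let P := V * M.transpose
  have hP : IsUnit P.det := by
    rw [Matrix.det_mul, Matrix.det_transpose]; exact hV.mul hM
  have hPe : ∀ i a, P i a = M.mulVec (veron n ![(e i : ℂ), 1 + (e i : ℂ) * z]) a := by
    intro i a
    simp only [P, Matrix.mul_apply, Matrix.mulVec, dotProduct, V, Matrix.projVandermonde_apply, veron,
      Matrix.transpose_apply]
    apply Finset.sum_congr rfl
    intro b _
    simp [Fin.val_rev]
    ring
  have hs0 : s0 ∈ T' := hTT' (Finset.mem_insert_self _ _)
  let i0 := e.symm ⟨s0, hs0⟩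
  have hi0 : (e i0 : ℂ) = s0 := by simp [i0]
  let l := P⁻¹.mulVec (Pi.single i0 1)
  have hl : P.mulVec l = Pi.single i0 1 := by
    simp only [l]
    rw [Matrix.mulVec_mulVec, Matrix.mul_nonsing_inv _ hP, Matrix.one_mulVec]
  have hl' : ∀ i, ∑ a, l a * M.mulVec (veron n ![(e i : ℂ), 1 + (e i : ℂ) * z]) a
      = (Pi.single i0 1 : Fin (n + 1) → ℂ) i := by
    intro i
    rw [← hl]
    simp only [Matrix.mulVec, dotProduct] at *
    apply Finset.sum_congr rfl
    intro a _
    rw [hPe]; ring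
  refine ⟨l, ?_, ?_⟩
  · have := hl' i0
    rw [hi0] at this
    rw [this]; simp
  · intro s hs
    have hs' : s ∈ T' := hTT' (Finset.mem_insert_of_mem hs)
    have := hl' (e.symm ⟨s, hs'⟩)
    rw [Equiv.apply_symm_apply] at this
    rw [this, Pi.single_eq_of_ne]
    intro h
    apply h0
    have h2 := congrArg (fun i => (e i : ℂ)) h
    simp only [Equiv.apply_symm_apply, hi0] at h2
    rwa [← h2]

theorem exists_param {n : ℕ} (M : Matrix (Fin (n + 1)) (Fin (n + 1)) ℂ) (Z : Set (PP n))
    (hZ : Z.Finite)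
    (h : ∀ P ∈ Z, ∃ v : Fin 2 → ℂ, v ≠ 0 ∧ ∃ c : ℂ, c ≠ 0 ∧ P.rep = c • M.mulVec (veron n v)) :
    ∃ z : ℂ, ∀ P ∈ Z, ∃ s c : ℂ, c ≠ 0 ∧ P.rep = c • M.mulVec (veron n ![s, 1 + s * z]) := by
  classical
  choose! v hv0 c hc0 hc using h
  obtain ⟨z, hz⟩ := (hZ.image (fun P => v P 1 / v P 0)).exists_notMem
  refine ⟨z, fun P hP => ?_⟩
  have hne : v P 1 - z * v P 0 ≠ 0 := by
    intro h
    by_cases h0 : v P 0 = 0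
    · apply hv0 P hP
      rw [h0, mul_zero, sub_zero] at h
      ext i; fin_cases i <;> simp [h0, h]
    · exact hz ⟨P, hP, by simp only; rw [div_eq_iff h0]; linear_combination h⟩
  set w := v P 1 - z * v P 0 with hw
  refine ⟨v P 0 / w, c P * w ^ n, mul_ne_zero (hc0 P hP) (pow_ne_zero _ hne), ?_⟩
  have hve : veron n (v P) = w ^ n • veron n ![v P 0 / w, 1 + v P 0 / w * z] := by
    ext i
    simp only [veron, Pi.smul_apply, smul_eq_mul, Matrix.cons_val_zero, Matrix.cons_val_one]
    have e1 : v P 0 = w * (v P 0 / w) := by field_simp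
    have e2 : v P 1 = w * (1 + v P 0 / w * z) := by field_simp; rw [hw]; ring
    have hi : w ^ n = w ^ (i : ℕ) * w ^ (n - (i : ℕ)) := by
      rw [← pow_add]; congr 1; have := i.2; omega
    rw [hi]
    conv_lhs => rw [e1, e2, mul_pow, mul_pow]
    ring
  rw [hc P hP, hve, Matrix.mulVec_smul, smul_smul]

open Polynomial in
theorem core {n k d : ℕ} (hk : k ≤ n - 2) (hd : 1 ≤ d)
    (L' : Fin (n - 1) → ℕ) (A : Config n L') (G : Matrix (Fin (n + 1)) (Fin (k + 1)) ℂ)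
    (H : HilbF n d (configSet A ∪ projSet G) = HilbF n d (configSet A) + (d + k).choose k)
    (ht : ∀ S : Finset (Σ i, Fin (L' i)),
        ((∑ j : S, (n + 1 - (j.1.1.1 + 1)) ≤ n + 1) →
          ∀ w : S → Fin (n + 1) → ℂ, ∃ v, ∀ j : S, ∃ c, (A j.1.1 j.1.2).mulVec c = v - w j) ∧
        ((n + 1 ≤ ∑ j : S, (n + 1 - (j.1.1.1 + 1))) →
          ∀ v, (∀ j : S, ∃ c, (A j.1.1 j.1.2).mulVec c = v) → v = 0))
    (hnum : d * n + 1 < (∑ i : Fin (n - 1), L' i * (i.1 + 1)) + (k + 1))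
    (C0 : Set (PP n)) (hC : IsRNC n C0)
    (hA : ∀ i j, (C0 ∩ projSet (A i j)).ncard = i.1 + 1)
    (hG : (C0 ∩ projSet G).ncard = k + 1) : False := by
  classical
  obtain ⟨M, hM, hCM⟩ := hC
  have hfA : ∀ i j, (C0 ∩ projSet (A i j)).Finite := fun i j =>
    Set.finite_of_ncard_ne_zero (by rw [hA]; omega)
  have hfG : (C0 ∩ projSet G).Finite := Set.finite_of_ncard_ne_zero (by rw [hG]; omega)
  let Z : Set (PP n) := (⋃ j : (Σ i, Fin (L' i)), C0 ∩ projSet (A j.1 j.2)) ∪ (C0 ∩ projSet G)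
  have hZ : Z.Finite := (Set.finite_iUnion fun j => hfA _ _).union hfG
  obtain ⟨z, hz⟩ := exists_param M Z hZ (by
    intro P hP
    have : P ∈ C0 := by
      rcases hP with hP | hP
      · obtain ⟨j, hj⟩ := Set.mem_iUnion.1 hP
        exact hj.1
      · exact hP.1
    rw [hCM] at this
    exact this)
  choose! s c hc0 hc using hz
  let γ : ℂ → Fin (n + 1) → ℂ := fun s => M.mulVec (veron n ![s, 1 + s * z])
  have hinj : Set.InjOn s Z := by
    intro P hP Q hQ hs
    have h1 := hc P hP
    have h2 := hc Q hQ
    rw [← hs] at h2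
    rw [← P.mk_rep, ← Q.mk_rep, Projectivization.mk_eq_mk_iff']
    refine ⟨c P * (c Q)⁻¹, ?_⟩
    rw [h2, h1, smul_smul, mul_assoc, inv_mul_cancel₀ (hc0 Q hQ), mul_one]
  have hmk : ∀ {m : ℕ} (B : Matrix (Fin (n + 1)) (Fin m) ℂ) (hB : (C0 ∩ projSet B) ⊆ Z)
      (hf : (C0 ∩ projSet B).Finite), ∃ T : Finset ℂ, T.card = (C0 ∩ projSet B).ncard ∧
      ∀ t ∈ T, γ t ∈ Submodule.span ℂ (Set.range fun j => fun r => B r j) := by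
    intro m B hB hf
    refine ⟨hf.toFinset.image s, ?_, ?_⟩
    · rw [Finset.card_image_of_injOn, Set.ncard_eq_toFinset_card _ hf]
      intro P hP Q hQ
      rw [Set.Finite.coe_toFinset] at hP hQ
      exact hinj (hB hP) (hB hQ)
    · intro t htt
      obtain ⟨P, hP, rfl⟩ := Finset.mem_image.1 htt
      rw [Set.Finite.mem_toFinset] at hP
      have h1 : P.rep ∈ Submodule.span ℂ (Set.range fun j => fun r => B r j) := hP.2
      have h2 : γ (s P) = (c P)⁻¹ • P.rep := by
        rw [hc P (hB hP), smul_smul, inv_mul_cancel₀ (hc0 P (hB hP)), one_smul]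
      rw [h2]
      exact Submodule.smul_mem _ _ h1
  have hT := fun j : (Σ i, Fin (L' i)) => hmk (A j.1 j.2)
    (fun P hP => Or.inl (Set.mem_iUnion.2 ⟨j, hP⟩)) (hfA _ _)
  choose T hTc hTm using hT
  obtain ⟨TG, hGc, hGm⟩ := hmk G (fun P hP => Or.inr hP) hfG
  rw [hG] at hGc
  obtain ⟨s0, hs0⟩ : TG.Nonempty := Finset.card_pos.1 (by omega)
  have hVan : ∀ f ∈ vanishOn n d (configSet A), ∀ i j,
      ∀ x ∈ Submodule.span ℂ (Set.range fun a => fun r => A i j r a), MvPolynomial.eval x f = 0 := by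
    intro f hf i j
    have hf' := mem_vanishOn.1 hf
    apply (vanish_proj hd hf'.1).1
    intro P hP
    exact hf'.2 P (Set.mem_iUnion.2 ⟨i, Set.mem_iUnion.2 ⟨j, hP⟩⟩)
  have hdisj : ∀ t ∈ TG, ∀ j, t ∉ T j := by
    intro t htG j htj
    obtain ⟨l, hl, -⟩ := exists_functional M hM z t ∅ (by simp) (by simp)
    obtain ⟨f, hf, hfG⟩ := exists_form hd (configSet A) G H l
    have h1 := hfG _ (hGm t htG)
    rw [hVan f hf j.1 j.2 _ (hTm j t htj)] at h1
    exact pow_ne_zero d hl h1.symm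
  obtain ⟨l, hl0, hl⟩ := exists_functional M hM z s0 (TG.erase s0) (by simp)
    (by rw [Finset.card_erase_of_mem hs0]; omega)
  obtain ⟨f, hf, hfG⟩ := exists_form hd (configSet A) G H l
  let γp : Fin (n + 1) → ℂ[X] := fun a =>
    ∑ b : Fin (n + 1), C (M a b) * (X ^ (b : ℕ) * (1 + X * C z) ^ (n - (b : ℕ)))
  have hγp : ∀ t, (fun a => (γp a).eval t) = γ t := by
    intro t; ext a
    simp [γp, γ, Matrix.mulVec, dotProduct, eval_finsetSum, veron]
    simp only [mul_comm z t]
  have hγd : ∀ a, (γp a).natDegree ≤ n := by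
    intro a
    apply natDegree_sum_le_of_forall_le
    intro b _
    have hb := b.2
    have h1 : (1 + X * C z : ℂ[X]).natDegree ≤ 1 := by compute_degree
    have h2 := natDegree_pow_le_of_le (n - (b : ℕ)) h1
    have h3 : (X ^ (b : ℕ) : ℂ[X]).natDegree ≤ b := natDegree_X_pow_le _
    refine (natDegree_C_mul_le _ _).trans ((natDegree_mul_le_of_le h3 h2).trans ?_)
    omega
  have hfh := (mem_vanishOn.1 hf).1
  let h : ℂ[X] := MvPolynomial.aeval γp f
  have hhd : h.natDegree ≤ d * n :=
    MvPolynomial.aeval_natDegree_le f hfh.totalDegree_le γp hγd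
  have hhe : ∀ t, h.eval t = MvPolynomial.eval (γ t) f := by
    intro t
    rw [← hγp]
    simp only [h]
    rw [MvPolynomial.aeval_def, ← Polynomial.coe_evalRingHom, MvPolynomial.hom_eval₂,
      MvPolynomial.eval, MvPolynomial.coe_eval₂Hom]
    congr 1
    ext; simp
  have hh0 : h ≠ 0 := by
    intro h0
    have h1 := hhe s0
    rw [h0, eval_zero, hfG _ (hGm s0 hs0)] at h1
    exact pow_ne_zero d hl0 h1.symm
  have hcount := bez_count h hh0 T (TG.erase s0)
    (fun t ht => hdisj t (Finset.mem_of_mem_erase ht))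
    (by
      intro t ht
      rw [hhe, hfG _ (hGm t (Finset.mem_of_mem_erase ht))]
      have := hl t ht
      change (∑ a, l a * M.mulVec (veron n ![t, 1 + t * z]) a) ^ d = 0
      rw [this, zero_pow (by omega)])
    (by
      intro t
      let S : Finset (Σ i, Fin (L' i)) := Finset.univ.filter (fun j => t ∈ T j)
      have hSm : ∀ j : S, t ∈ T j.1 := fun j => (Finset.mem_filter.1 j.2).2
      have hle : ∑ j : S, (n + 1 - (j.1.1.1 + 1)) ≤ n + 1 := by
        by_contra hlt
        have := (ht S).2 (by omega) (γ t) (fun j => (mem_span_cols _ _).1 (hTm j.1 t (hSm j)))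
        obtain ⟨l, hl, -⟩ := exists_functional M hM z t ∅ (by simp) (by simp)
        apply hl
        change ∑ a, l a * γ t a = 0
        rw [this]; simp
      have := mult_lemma (ι := S) f
        (fun j => Submodule.span ℂ (Set.range fun a => fun r => A j.1.1 j.1.2 r a))
        (fun j => hVan f hf _ _)
        (by
          intro w
          obtain ⟨v, hv⟩ := (ht S).1 hle w
          exact ⟨v, fun j => (mem_span_cols _ _).2 (hv j)⟩)
        γp t (fun j => by rw [hγp]; exact hTm j.1 t (hSm j))
      rw [Fintype.card_coe] at this
      exact this)
  have hsum : ∑ j, (T j).card = ∑ i : Fin (n - 1), L' i * (i.1 + 1) := by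
    simp only [hTc, hA]
    rw [Fintype.sum_sigma]
    simp
  rw [hsum, Finset.card_erase_of_mem hs0] at hcount
  omega

/-- Bezout-type non-feasibility criterion.  Let `Λ'` be a configuration of weight `L'`,
`Γ` a generic `k`-dimensional subspace, `Λ = Λ' ∪ Γ` of weight `L = L' + e_k`.  If for
generic `Λ', Γ` one has `H(Λ,d) = H(Λ',d) + C(d+k,k)` (expressed by a nonzero polynomial
in all the matrix entries) and `Σ lᵢ(i+1) - 1 > d·n`, then `L` is non-feasible. -/
theorem bezout_nonfeasibility (n k d : ℕ) (hn : 3 ≤ n) (hk : k ≤ n - 2) (hd : 1 ≤ d)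
    (L' : Fin (n - 1) → ℕ) (L : Fin (n - 1) → ℕ)
    (hL : L = fun i => L' i + if i.1 = k then 1 else 0)
    (hHF : ∃ F : MvPolynomial
        (((i : Fin (n - 1)) × (Fin (L' i) × Fin (n + 1) × Fin (i.1 + 1))) ⊕
          (Fin (n + 1) × Fin (k + 1))) ℂ,
      F ≠ 0 ∧ ∀ (A : Config n L') (G : Matrix (Fin (n + 1)) (Fin (k + 1)) ℂ),
        FullRank A → G.rank = k + 1 →
        MvPolynomial.eval
          (Sum.elim (fun p => A p.1 p.2.1 p.2.2.1 p.2.2.2) (fun q => G q.1 q.2)) F ≠ 0 →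
        HilbF n d (configSet A ∪ projSet G) =
          HilbF n d (configSet A) + (d + k).choose k)
    (hnum : d * n + 1 < ∑ i : Fin (n - 1), L i * (i.1 + 1)) :
    NonFeasible n L := by
  have hk' : k < n - 1 := by omega
  obtain ⟨F, hF0, hF⟩ := hHF
  obtain ⟨P, hP0, hP⟩ := trans_all (J := Σ i : Fin (n - 1), Fin (L' i)) (n + 1)
    (fun j => j.1.1 + 1) (fun j => by have := j.1.2; omega)
  let ψ : (Σ j : (Σ i : Fin (n - 1), Fin (L' i)), Fin (n + 1) × Fin (j.1.1 + 1)) →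
      (((i : Fin (n - 1)) × (Fin (L' i) × Fin (n + 1) × Fin (i.1 + 1))) ⊕
          (Fin (n + 1) × Fin (k + 1))) := fun p => Sum.inl ⟨p.1.1, p.1.2, p.2.1, p.2.2⟩
  have hψ : Function.Injective ψ := by
    rintro ⟨⟨i, j⟩, r, c⟩ ⟨⟨i', j'⟩, r', c'⟩ h
    simp only [ψ, Sum.inl.injEq, Sigma.mk.injEq] at h
    obtain ⟨rfl, h⟩ := h
    simp only [heq_eq_eq, Prod.mk.injEq] at h
    obtain ⟨rfl, rfl, rfl⟩ := h
    rfl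
  subst hL
  let φ : (((i : Fin (n - 1)) × (Fin (L' i) × Fin (n + 1) × Fin (i.1 + 1))) ⊕
          (Fin (n + 1) × Fin (k + 1))) →
      ((i : Fin (n - 1)) × (Fin (L' i + if i.1 = k then 1 else 0) × Fin (n + 1) × Fin (i.1 + 1))) :=
    Sum.elim (fun p => ⟨p.1, Fin.castAdd _ p.2.1, p.2.2.1, p.2.2.2⟩)
      (fun q => ⟨⟨k, hk'⟩, ⟨L' ⟨k, hk'⟩, by simp⟩, q.1, q.2⟩)
  have hφ : Function.Injective φ := by
    rintro (⟨i, j, r, c⟩ | ⟨r, c⟩) (⟨i', j', r', c'⟩ | ⟨r', c'⟩) h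
    · simp only [φ, Sum.elim_inl, Sigma.mk.injEq] at h
      obtain ⟨rfl, h⟩ := h
      simp only [heq_eq_eq, Prod.mk.injEq, Fin.castAdd_inj] at h
      obtain ⟨rfl, rfl, rfl⟩ := h
      rfl
    · simp only [φ, Sum.elim_inl, Sum.elim_inr, Sigma.mk.injEq] at h
      obtain ⟨rfl, h⟩ := h
      simp only [heq_eq_eq, Prod.mk.injEq, Fin.ext_iff, Fin.val_castAdd] at h
      have := j.2
      omega
    · simp only [φ, Sum.elim_inl, Sum.elim_inr, Sigma.mk.injEq] at h
      obtain ⟨rfl, h⟩ := h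
      simp only [heq_eq_eq, Prod.mk.injEq, Fin.ext_iff, Fin.val_castAdd] at h
      have := j'.2
      omega
    · simp only [φ, Sum.elim_inr, Sigma.mk.injEq, heq_eq_eq, true_and, Prod.mk.injEq] at h
      obtain ⟨rfl, rfl⟩ := h
      rfl
  refine ⟨MvPolynomial.rename φ (F * MvPolynomial.rename ψ P), ?_, ?_⟩
  · rw [Ne, MvPolynomial.rename_eq_zero_iff_of_injective _ hφ, mul_eq_zero,
      MvPolynomial.rename_eq_zero_iff_of_injective _ hψ]
    tauto
  · intro B hB hev
    rintro ⟨C0, hC, hmax⟩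
    rw [MvPolynomial.eval_rename, map_mul, MvPolynomial.eval_rename] at hev
    let A : Config n L' := fun i j => B i (Fin.castAdd _ j)
    let G : Matrix (Fin (n + 1)) (Fin (k + 1)) ℂ := B ⟨k, hk'⟩ ⟨L' ⟨k, hk'⟩, by simp⟩
    have hFA := hF A G (fun i j => hB _ _) (hB ⟨k, hk'⟩ _) (by
      have := left_ne_zero_of_mul hev
      convert this using 3
      ext (p | q) <;> rfl)
    have hPA := hP (fun j => A j.1 j.2) (right_ne_zero_of_mul hev)
    refine core hk hd L' A G hFA hPA ?_ C0 hC (fun i j => hmax _ _) (hmax ⟨k, hk'⟩ _)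
    refine hnum.trans_eq ?_
    simp only [add_mul, Finset.sum_add_distrib]
    congr 1
    rw [Finset.sum_eq_single (⟨k, hk'⟩ : Fin (n - 1))]
    · simp
    · intro i _ hi
      rw [if_neg, zero_mul]
      intro h
      exact hi (Fin.ext h)
    · simp

end
end
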